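/- There is a constant C > 0 such that for every finite subset F ⊂ ℤ and every 0 < λ < 1, the number of x ∈ ℤ with sup_{n ∈ ℕ} ℳ_{2^n}(𝟙_F)(x) > λ is at most C λ⁻¹ log²(e/λ) · #F. -/

import Mathlib

open scoped BigOperators

/-- The set of primes `p ≤ N`. -/
def primesUpTo (N : ℕ) : Finset ℕ := (Finset.range (N + 1)).filter Nat.Prime

/-- `ϑ(N) = Σ_{p ∈ ℙ_N} log p`. -/
noncomputable def theta (N : ℕ) : ℝ := ∑ p ∈ primesUpTo N, Real.log p

/-- The weighted average `ℳ_N f(x) = (1/ϑ(N)) Σ_{p ∈ ℙ_N} f(x + p) log p`. -/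
noncomputable def weightedPrimeAvg (f : ℤ → ℝ) (N : ℕ) (x : ℤ) : ℝ :=
  (theta N)⁻¹ * ∑ p ∈ primesUpTo N, f (x + p) * Real.log p

/-!
A Selberg sieve majorant for the primes in `(R, N]`, with the primes up to `Z = 2 ^ J` sieved out
exactly, is expanded into Ramanujan sums, which splits `weightedPrimeAvg f N` into ordinary and
arithmetically twisted averages of `f`. The small moduli contribute the ordinary averages, at the
cost of the factor `∏ p ≤ Z, (1 - 1 / p)⁻¹ ≲ J ^ 2`; they are handled by the weak type `(1, 1)`
covering lemma. The moduli `≥ Z` are handled in `ℓ²`, where almost orthogonality of the Ramanujan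
sums and the maximal inequality along progressions give a gain of `Z ^ (-1 / 8)`. Both contributions
balance for `J` comparable to `log (e / λ)`. The sieve is only efficient for `N ≥ 2 ^ (C * J ^ 2)`;
at smaller scales the trivial bound `log p ≤ log N` already loses no more than `J ^ 2`.
-/

namespace PrimeMaximal

open Finset Function

section PeriodicSums

variable {A : Type*} [AddCommGroup A] {F : ℤ → A} {M : ℤ}

lemma sum_Ico_add_sum_Ico (F : ℤ → A) {a b c : ℤ} (hab : a ≤ b) (hbc : b ≤ c) :
    ∑ m ∈ Ico a b, F m + ∑ m ∈ Ico b c, F m = ∑ m ∈ Ico a c, F m := by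
  rw [← Ico_union_Ico_eq_Ico hab hbc, sum_union (Ico_disjoint_Ico_consecutive a b c)]

lemma sum_Ico_period_eq (hF : Periodic F M) (hM : 0 ≤ M) (a : ℤ) :
    ∑ m ∈ Ico a (a + M), F m = ∑ m ∈ Ico 0 M, F m := by
  have succ_start (a : ℤ) :
      ∑ m ∈ Ico (a + 1) (a + 1 + M), F m = ∑ m ∈ Ico a (a + M), F m := by
    have left := sum_Ico_add_sum_Ico F (show a ≤ a + 1 by lia) (show a + 1 ≤ a + 1 + M by lia)
    have right := sum_Ico_add_sum_Ico F (show a ≤ a + M by lia) (show a + M ≤ a + 1 + M by lia)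
    rw [show Ico a (a + 1) = {a} by ext; simp; lia] at left
    rw [show Ico (a + M) (a + 1 + M) = {a + M} by ext; simp; lia] at right
    rw [sum_singleton] at left right
    rw [hF a, ← left, add_comm (F a)] at right
    exact (add_right_cancel right).symm
  induction a using Int.induction_on with
  | zero => rw [zero_add]
  | succ i ih => rw [succ_start, ih]
  | pred i ih => rw [← ih, ← succ_start, sub_add_cancel]

lemma sum_Ico_add_eq_of_periodic (hF : Periodic F M) (hM : 0 ≤ M) (t : ℤ) :
    ∑ m ∈ Ico 0 M, F (m + t) = ∑ m ∈ Ico 0 M, F m := by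
  rw [sum_Ico_add', zero_add, add_comm M, sum_Ico_period_eq hF hM]

lemma norm_sum_Ico_le_of_periodic {E : Type*} [SeminormedAddCommGroup E] {F : ℤ → E}
    (hF : Periodic F M) (hM : 0 < M) (hmean : ∑ m ∈ Ico 0 M, F m = 0) {B : ℝ}
    (hB : ∀ n, ‖F n‖ ≤ B) (a b : ℤ) : ‖∑ m ∈ Ico a b, F m‖ ≤ M * B := by
  have hB0 : 0 ≤ B := (norm_nonneg _).trans (hB 0)
  induction hk : (b - a).toNat using Nat.strong_induction_on generalizing a with
  | _ k ih =>
    rcases le_or_gt (b - a) M with h | h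
    · calc ‖∑ m ∈ Ico a b, F m‖ ≤ ∑ _ ∈ Ico a b, B := norm_sum_le_of_le _ fun _ _ => hB _
        _ = #(Ico a b) * B := by rw [sum_const, nsmul_eq_mul]
        _ ≤ M * B := by
          gcongr
          have : ((b - a).toNat : ℤ) ≤ M := by lia
          rw [Int.card_Ico]
          exact_mod_cast this
    · rw [← sum_Ico_add_sum_Ico F (show a ≤ a + M by lia) (show a + M ≤ b by lia),
        sum_Ico_period_eq hF hM.le, hmean, zero_add]
      exact ih _ (by lia) _ rfl

/-- If `G` has average `V` along every progression of step `w` and length `k`, while `F` has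
period `w`, then `G` can be replaced by `V` in the correlation of `F` and `G`. -/
lemma sum_Ico_mul_eq_of_progression_sum {F G : ℤ → ℝ} (hM : 0 ≤ M) {k : ℕ} (hk : k ≠ 0) {w : ℤ}
    {V : ℝ} (hFG : Periodic (fun n => F n * G n) M) (hF : Periodic F w)
    (hG : ∀ x : ℤ, ∑ j ∈ range k, G (x + j * w) = k * V) :
    ∑ m ∈ Ico 0 M, F m * G m = V * ∑ m ∈ Ico 0 M, F m := by
  have shifted (j : ℕ) : ∑ m ∈ Ico 0 M, F m * G (m + j * w) = ∑ m ∈ Ico 0 M, F m * G m := by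
    rw [← sum_Ico_add_eq_of_periodic hFG hM (j * w)]
    refine sum_congr rfl fun m _ => ?_
    rw [hF.nat_mul j m]
  refine mul_left_cancel₀ (Nat.cast_ne_zero.mpr hk : (k : ℝ) ≠ 0) ?_
  calc (k : ℝ) * ∑ m ∈ Ico 0 M, F m * G m
      = ∑ j ∈ range k, ∑ m ∈ Ico 0 M, F m * G (m + j * w) := by
        simp only [shifted, sum_const, card_range, nsmul_eq_mul]
    _ = ∑ m ∈ Ico 0 M, F m * ∑ j ∈ range k, G (m + j * w) := by
        rw [sum_comm]
        simp only [mul_sum]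
    _ = k * (V * ∑ m ∈ Ico 0 M, F m) := by
        simp only [hG, mul_sum]
        exact sum_congr rfl fun m _ => by ring

lemma sum_range_zmod {k : ℕ} [NeZero k] (G : ZMod k → A) :
    ∑ j ∈ range k, G (j : ZMod k) = ∑ r, G r :=
  sum_bij' (fun j _ => (j : ZMod k)) (fun r _ => r.val) (by simp) (by simp [ZMod.val_lt])
    (fun _ hj => ZMod.val_natCast_of_lt (mem_range.mp hj)) (by simp) (by simp)

lemma sum_range_zmod_add_mul {k : ℕ} [NeZero k] (G : ZMod k → A) (x : ZMod k) {w : ZMod k}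
    (hw : IsUnit w) : ∑ j ∈ range k, G (x + j * w) = ∑ r, G r :=
  (sum_range_zmod fun r => G (x + r * w)).trans
    (Equiv.sum_comp (hw.unit.mulRight.trans (Equiv.addLeft x)) G)

end PeriodicSums

section RamanujanSums

/-- The squarefree integer coded by a finite set of primes: its product. Squarefree moduli are
represented throughout by their sets of prime factors. -/
def modulus (s : Finset Nat.Primes) : ℕ := ∏ p ∈ s, (p : ℕ)

/-- The Ramanujan sum `c_p` of a prime modulus: `p - 1` at the multiples of `p` and `-1`
elsewhere. -/
noncomputable def primeRamanujan (p : ℕ) (n : ℤ) : ℝ := (if (p : ℤ) ∣ n then (p : ℝ) else 0) - 1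

/-- The Ramanujan sum `c_q` of the squarefree modulus `q = modulus s`, defined through its
multiplicativity in `q`. -/
noncomputable def ramanujan (s : Finset Nat.Primes) (n : ℤ) : ℝ := ∏ p ∈ s, primeRamanujan p n

variable {s t : Finset Nat.Primes} {p : Nat.Primes} {M : ℤ}

lemma modulus_pos (s : Finset Nat.Primes) : 0 < modulus s := prod_pos fun p _ => p.2.pos

@[simp] lemma modulus_empty : modulus ∅ = 1 := prod_empty

lemma modulus_union (h : Disjoint s t) : modulus (s ∪ t) = modulus s * modulus t := prod_union h

lemma modulus_dvd_modulus (h : s ⊆ t) : modulus s ∣ modulus t := prod_dvd_prod_of_subset _ _ _ h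

lemma modulus_le_modulus (h : s ⊆ t) : modulus s ≤ modulus t :=
  Nat.le_of_dvd (modulus_pos t) (modulus_dvd_modulus h)

lemma dvd_modulus (hp : p ∈ s) : (p : ℕ) ∣ modulus s :=
  dvd_prod_of_mem (fun p : Nat.Primes => (p : ℕ)) hp

lemma dvd_modulus_iff : (p : ℕ) ∣ modulus s ↔ p ∈ s := by
  refine ⟨fun h => ?_, dvd_modulus⟩
  obtain ⟨q, hq, hpq⟩ := (p.2.prime.dvd_finsetProd_iff _).mp h
  rwa [Nat.Primes.coe_nat_injective ((Nat.prime_dvd_prime_iff_eq p.2 q.2).mp hpq)]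

lemma modulus_injective : Injective modulus := fun s t h => by
  ext p
  rw [← dvd_modulus_iff, h, dvd_modulus_iff]

lemma two_pow_card_le_modulus (s : Finset Nat.Primes) : 2 ^ #s ≤ modulus s :=
  pow_card_le_prod _ _ _ fun p _ => p.2.two_le

lemma ramanujan_insert (hp : p ∉ s) (n : ℤ) :
    ramanujan (insert p s) n = primeRamanujan p n * ramanujan s n := prod_insert hp

lemma ramanujan_union (h : Disjoint s t) (n : ℤ) :
    ramanujan (s ∪ t) n = ramanujan s n * ramanujan t n := prod_union h

lemma periodic_primeRamanujan {p : ℕ} (h : (p : ℤ) ∣ M) : Periodic (primeRamanujan p) M :=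
  fun n => by simp only [primeRamanujan, Int.dvd_add_left h]

lemma periodic_ramanujan (h : (modulus s : ℤ) ∣ M) : Periodic (ramanujan s) M := fun n =>
  prod_congr rfl fun _ hp =>
    periodic_primeRamanujan ((Int.natCast_dvd_natCast.mpr (dvd_modulus hp)).trans h) n

lemma abs_primeRamanujan_le (p : ℕ) (n : ℤ) :
    |primeRamanujan p n| ≤ 1 + if (p : ℤ) ∣ n then (p : ℝ) else 0 := by
  have : (0 : ℝ) ≤ p := p.cast_nonneg
  rw [primeRamanujan, abs_le]
  split_ifs <;> constructor <;> linarith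

lemma abs_ramanujan_le_modulus (s : Finset Nat.Primes) (n : ℤ) : |ramanujan s n| ≤ modulus s := by
  rw [ramanujan, abs_prod, modulus, Nat.cast_prod]
  refine prod_le_prod (fun _ _ => abs_nonneg _) fun p _ => ?_
  have : (2 : ℝ) ≤ (p : ℕ) := Nat.ofNat_le_cast.mpr p.2.two_le
  rw [primeRamanujan, abs_le]
  split_ifs <;> constructor <;> linarith

lemma intCast_modulus_dvd_iff {n : ℤ} :
    (modulus s : ℤ) ∣ n ↔ ∀ p ∈ s, ((p : ℕ) : ℤ) ∣ n := by
  refine ⟨fun h p hp => (Int.natCast_dvd_natCast.mpr (dvd_modulus hp)).trans h, fun h => ?_⟩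
  rw [modulus, Nat.cast_prod]
  refine prod_dvd_of_coprime (fun p _ q _ hpq => ?_) h
  exact Nat.isCoprime_iff_coprime.mpr ((Nat.coprime_primes p.2 q.2).mpr fun h =>
    hpq (Nat.Primes.coe_nat_injective h))

lemma prod_ite_dvd (t : Finset Nat.Primes) (n : ℤ) :
    ∏ p ∈ t, (if ((p : ℕ) : ℤ) ∣ n then ((p : ℕ) : ℝ) else 0) =
      if (modulus t : ℤ) ∣ n then (modulus t : ℝ) else 0 := by
  simp only [prod_ite_zero, intCast_modulus_dvd_iff]
  rw [modulus, Nat.cast_prod]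

lemma abs_ramanujan_le_sum_divisors (s : Finset Nat.Primes) (n : ℤ) :
    |ramanujan s n| ≤ ∑ t ∈ s.powerset, if (modulus t : ℤ) ∣ n then (modulus t : ℝ) else 0 := by
  simp only [← prod_ite_dvd, ← prod_one_add, ramanujan, abs_prod]
  exact prod_le_prod (fun _ _ => abs_nonneg _) fun p _ => abs_primeRamanujan_le p n

lemma primeRamanujan_eq_zmod (p : ℕ) (n : ℤ) :
    primeRamanujan p n = (if (n : ZMod p) = 0 then (p : ℝ) else 0) - 1 := by
  simp only [primeRamanujan, ZMod.intCast_zmod_eq_zero_iff_dvd]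

lemma isUnit_intCast_zmod {w : ℤ} (hw : ¬((p : ℕ) : ℤ) ∣ w) : IsUnit (w : ZMod (p : ℕ)) := by
  have := Fact.mk p.2
  rw [isUnit_iff_ne_zero]
  rwa [Ne, ZMod.intCast_zmod_eq_zero_iff_dvd]

lemma sum_primeRamanujan_progression {w : ℤ} (hw : ¬((p : ℕ) : ℤ) ∣ w) (x : ℤ) :
    ∑ j ∈ range p, primeRamanujan p (x + j * w) = 0 := by
  have := Fact.mk p.2
  have reindex := sum_range_zmod_add_mul
    (fun r : ZMod (p : ℕ) => (if r = 0 then ((p : ℕ) : ℝ) else 0) - 1) x (isUnit_intCast_zmod hw)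
  simp only [primeRamanujan_eq_zmod, Int.cast_add, Int.cast_mul, Int.cast_natCast]
  rw [reindex]
  simp

lemma sum_primeRamanujan_mul_progression {w : ℤ} (hw : ¬((p : ℕ) : ℤ) ∣ w) (n x : ℤ) :
    ∑ j ∈ range p, primeRamanujan p (x + j * w) * primeRamanujan p (n - (x + j * w)) =
      (p : ℕ) * primeRamanujan p n := by
  have := Fact.mk p.2
  have reindex := sum_range_zmod_add_mul (fun r : ZMod (p : ℕ) =>
    ((if r = 0 then ((p : ℕ) : ℝ) else 0) - 1) *
      ((if (n : ZMod (p : ℕ)) - r = 0 then ((p : ℕ) : ℝ) else 0) - 1))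
    x (isUnit_intCast_zmod hw)
  simp only [primeRamanujan_eq_zmod, Int.cast_sub, Int.cast_add, Int.cast_mul, Int.cast_natCast]
  rw [reindex]
  simp only [sub_mul, mul_sub, ite_mul, mul_ite, zero_mul, mul_zero, sum_sub_distrib, sub_eq_zero,
    sum_ite_eq, sum_ite_eq', mem_univ, if_true]
  simp

lemma not_dvd_modulus (hp : p ∉ s) : ¬((p : ℕ) : ℤ) ∣ (modulus s : ℤ) := by
  rwa [Int.natCast_dvd_natCast, dvd_modulus_iff]

lemma sum_ramanujan_mul_ramanujan_sub (hM : 0 ≤ M) (hs : (modulus s : ℤ) ∣ M) (n : ℤ) :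
    ∑ m ∈ Ico 0 M, ramanujan s m * ramanujan s (n - m) = M * ramanujan s n := by
  induction s using Finset.induction_on with
  | empty =>
    have : ((M.toNat : ℤ) : ℝ) = M := by rw [Int.toNat_of_nonneg hM]
    simp only [ramanujan, prod_empty, mul_one, sum_const, Int.card_Ico, sub_zero, nsmul_eq_mul]
    exact_mod_cast this
  | insert p s hp ih =>
    have hsM : (modulus s : ℤ) ∣ M :=
      (Int.natCast_dvd_natCast.mpr (modulus_dvd_modulus (subset_insert p s))).trans hs
    have hpM : ((p : ℕ) : ℤ) ∣ M :=
      (Int.natCast_dvd_natCast.mpr (dvd_modulus (mem_insert_self p s))).trans hs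
    have replace_factor := sum_Ico_mul_eq_of_progression_sum (w := modulus s) hM p.2.ne_zero
      (F := fun m => ramanujan s m * ramanujan s (n - m))
      (G := fun m => primeRamanujan p m * primeRamanujan p (n - m))
      (fun m => by
        simp only [sub_add_eq_sub_sub, (periodic_ramanujan hsM).sub_eq,
          (periodic_primeRamanujan hpM).sub_eq, periodic_ramanujan hsM m,
          periodic_primeRamanujan hpM m])
      (fun m => by
        simp only [sub_add_eq_sub_sub, (periodic_ramanujan dvd_rfl).sub_eq,
          periodic_ramanujan dvd_rfl m])
      (sum_primeRamanujan_mul_progression (not_dvd_modulus hp) n)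
    calc ∑ m ∈ Ico 0 M, ramanujan (insert p s) m * ramanujan (insert p s) (n - m)
        = ∑ m ∈ Ico 0 M, ramanujan s m * ramanujan s (n - m) *
            (primeRamanujan p m * primeRamanujan p (n - m)) :=
          sum_congr rfl fun m _ => by simp only [ramanujan_insert hp]; ring
      _ = M * ramanujan (insert p s) n := by
          rw [replace_factor, ih hsM, ramanujan_insert hp]
          ring

lemma sum_ramanujan_mul_ramanujan_of_notMem (hps : p ∉ s) (hpt : p ∈ t) (hM : 0 ≤ M)
    (hs : (modulus s : ℤ) ∣ M) (ht : (modulus t : ℤ) ∣ M) (a b : ℤ) :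
    ∑ m ∈ Ico 0 M, ramanujan s (m + a) * ramanujan t (m + b) = 0 := by
  have hpM : ((p : ℕ) : ℤ) ∣ M := (Int.natCast_dvd_natCast.mpr (dvd_modulus hpt)).trans ht
  have hs' : (modulus s : ℤ) ∣ modulus (s ∪ t.erase p) :=
    Int.natCast_dvd_natCast.mpr (modulus_dvd_modulus subset_union_left)
  have ht' : (modulus (t.erase p) : ℤ) ∣ modulus (s ∪ t.erase p) :=
    Int.natCast_dvd_natCast.mpr (modulus_dvd_modulus subset_union_right)
  have htM : (modulus (t.erase p) : ℤ) ∣ M :=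
    (Int.natCast_dvd_natCast.mpr (modulus_dvd_modulus (erase_subset p t))).trans ht
  have factor_out (n : ℤ) : ramanujan t n = ramanujan (t.erase p) n * primeRamanujan p n := by
    rw [mul_comm, ← ramanujan_insert (notMem_erase p t), insert_erase hpt]
  have replace_factor := sum_Ico_mul_eq_of_progression_sum (w := modulus (s ∪ t.erase p)) hM
    p.2.ne_zero (F := fun m => ramanujan s (m + a) * ramanujan (t.erase p) (m + b))
    (G := fun m => primeRamanujan p (m + b)) (V := 0)
    (fun m => by
      simp only [add_right_comm m M, periodic_ramanujan hs (m + a), periodic_ramanujan htM (m + b),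
        periodic_primeRamanujan hpM (m + b)])
    (fun m => by
      simp only [add_right_comm m (modulus (s ∪ t.erase p) : ℤ), periodic_ramanujan hs' (m + a),
        periodic_ramanujan ht' (m + b)])
    (fun x => by
      have hp : p ∉ s ∪ t.erase p := by simp [hps]
      simp only [add_right_comm x _ b, mul_zero]
      exact sum_primeRamanujan_progression (not_dvd_modulus hp) (x + b))
  simpa only [factor_out, mul_assoc, zero_mul] using replace_factor

lemma sum_ramanujan_mul_ramanujan_of_ne (hst : s ≠ t) (hM : 0 ≤ M) (hs : (modulus s : ℤ) ∣ M)
    (ht : (modulus t : ℤ) ∣ M) (a b : ℤ) :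
    ∑ m ∈ Ico 0 M, ramanujan s (m + a) * ramanujan t (m + b) = 0 := by
  by_cases hts : t ⊆ s
  · obtain ⟨p, hps, hpt⟩ := not_subset.mp fun h => hst (Subset.antisymm h hts)
    simpa only [mul_comm] using
      sum_ramanujan_mul_ramanujan_of_notMem hpt hps hM ht hs b a
  · obtain ⟨p, hpt, hps⟩ := not_subset.mp hts
    exact sum_ramanujan_mul_ramanujan_of_notMem hps hpt hM hs ht a b

end RamanujanSums

section MaximalFunction

open MeasureTheory

/-- The progression `x + e, x + 2e, …, x + ne`. The base point `x` itself is left out, which is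
what makes the greedy covering argument below work. -/
def progression (e n : ℕ) (x : ℤ) : Finset ℤ := (Icc 1 n).image fun i : ℕ => x + e * i

/-- The average of `g` over the progression `x + e, x + 2e, …, x + ne`; it is `0` for `n = 0`. -/
noncomputable def progressionAvg (e n : ℕ) (g : ℤ → ℝ) (x : ℤ) : ℝ :=
  (n : ℝ)⁻¹ * ∑ y ∈ progression e n x, g y

variable {e : ℕ} {g : ℤ → ℝ} {k : ℤ → ℕ} {X : Finset ℤ}

lemma mem_progression {n : ℕ} {x y : ℤ} :
    y ∈ progression e n x ↔ ∃ i : ℕ, (1 ≤ i ∧ i ≤ n) ∧ x + e * i = y := by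
  simp only [progression, mem_image, mem_Icc]

lemma sum_progression {A : Type*} [AddCommMonoid A] (he : 0 < e) (n : ℕ) (x : ℤ) (g : ℤ → A) :
    ∑ y ∈ progression e n x, g y = ∑ i ∈ Icc 1 n, g (x + e * i) :=
  sum_image fun i _ j _ h => by
    exact_mod_cast mul_left_cancel₀ (Nat.cast_ne_zero.mpr he.ne') (add_left_cancel h)

lemma card_progression (he : 0 < e) (n : ℕ) (x : ℤ) : #(progression e n x) = n := by
  rw [card_eq_sum_ones, sum_progression he, sum_const, Nat.card_Icc, Nat.add_sub_cancel,
    smul_eq_mul, mul_one]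

lemma progressionAvg_nonneg (hg : ∀ y, 0 ≤ g y) (e n : ℕ) (x : ℤ) : 0 ≤ progressionAvg e n g x :=
  mul_nonneg (by positivity) (sum_nonneg fun _ _ => hg _)

lemma disjoint_progression {x x' : ℤ} {n n' : ℕ} (he : 0 < e) (hxx' : x ≤ x')
    (hx' : x' ∉ (range n).image fun i : ℕ => x + (e : ℤ) * i) :
    Disjoint (progression e n' x') (progression e n x) := by
  refine disjoint_left.mpr fun y hy' hy => hx' ?_
  obtain ⟨i', hi', rfl⟩ := mem_progression.mp hy'
  obtain ⟨i, hi, hii'⟩ := mem_progression.mp hy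
  have difference : x' - x = e * ((i : ℤ) - i') := by linear_combination -hii'
  have le_index : i' ≤ i := by
    by_contra! h
    have : (e : ℤ) * ((i : ℤ) - i') < 0 := mul_neg_of_pos_of_neg (by exact_mod_cast he) (by lia)
    lia
  refine mem_image.mpr ⟨i - i', mem_range.mpr (by lia), ?_⟩
  push_cast [Nat.cast_sub le_index]
  linear_combination -difference

lemma mul_card_le_sum_biUnion_progression (he : 0 < e) (hg : ∀ y, 0 ≤ g y) {t : ℝ} (ht : 0 ≤ t)
    (hk : ∀ x ∈ X, 1 ≤ k x) (hX : ∀ x ∈ X, t * k x ≤ ∑ y ∈ progression e (k x) x, g y) :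
    t * #X ≤ ∑ y ∈ X.biUnion fun x => progression e (k x) x, g y := by
  induction X using Finset.strongInduction with
  | _ X ih =>
    rcases X.eq_empty_or_nonempty with rfl | hne
    · simp
    -- The progression of the least point is disjoint from all progressions that start off it.
    let x := X.min' hne
    let covered := (range (k x)).image fun i : ℕ => x + (e : ℤ) * i
    have hxX : x ∈ X := X.min'_mem hne
    have hsub : X \ covered ⊂ X := (ssubset_iff_of_subset sdiff_subset).mpr
      ⟨x, hxX, notMem_sdiff_of_mem_right (mem_image.mpr ⟨0, mem_range.mpr (hk x hxX), by simp⟩)⟩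
    have hrest := ih _ hsub (fun y hy => hk y (hsub.1 hy)) fun y hy => hX y (hsub.1 hy)
    have hcard : (#X : ℝ) ≤ #(X \ covered) + k x := by
      have h := (card_le_card_sdiff_add_card (s := X) (t := covered)).trans
        (Nat.add_le_add_left card_image_le _)
      rw [card_range] at h
      exact_mod_cast h
    have hdisj : Disjoint ((X \ covered).biUnion fun x => progression e (k x) x)
        (progression e (k x) x) := by
      refine (disjoint_biUnion_left _ _ _).mpr fun x' hx' => ?_
      obtain ⟨hx'X, hx'⟩ := mem_sdiff.mp hx'
      exact disjoint_progression he (X.min'_le x' hx'X) hx'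
    calc t * #X ≤ t * (#(X \ covered) + k x) := by gcongr
      _ ≤ ∑ y ∈ (X \ covered).biUnion (fun x => progression e (k x) x) ∪ progression e (k x) x,
            g y := by
          rw [sum_union hdisj, mul_add]
          exact add_le_add hrest (hX x hxX)
      _ ≤ _ := sum_le_sum_of_subset_of_nonneg
          (union_subset (biUnion_subset_biUnion_of_subset_left _ hsub.1)
            (subset_biUnion_of_mem (fun x => progression e (k x) x) hxX)) fun y _ _ => hg y

lemma setIntegral_Ioc_indicator_Iio {a T : ℝ} (ha : 0 ≤ a) (haT : a ≤ T) (φ : ℝ → ℝ) :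
    ∫ t in Set.Ioc 0 T, (Set.Iio a).indicator φ t = ∫ t in 0..a, φ t := by
  have : Set.Ioc 0 T ∩ Set.Iio a = Set.Ioo 0 a := by
    ext t
    simp only [Set.mem_inter_iff, Set.mem_Ioc, Set.mem_Iio, Set.mem_Ioo]
    exact ⟨fun h => ⟨h.1.1, h.2⟩, fun h => ⟨⟨h.1, h.2.le.trans haT⟩, h.2⟩⟩
  rw [setIntegral_indicator measurableSet_Iio, this, ← integral_Ioc_eq_integral_Ioo,
    intervalIntegral.integral_of_le ha]

lemma setIntegral_Ioc_max_sub_half {b T : ℝ} (hb : 0 ≤ b) (hT : 2 * b ≤ T) :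
    ∫ t in Set.Ioc 0 T, max (b - t / 2) 0 = b ^ 2 := by
  have as_indicator (t : ℝ) :
      max (b - t / 2) 0 = (Set.Iio (2 * b)).indicator (fun t => b - t / 2) t := by
    by_cases h : t < 2 * b
    · rw [Set.indicator_of_mem (Set.mem_Iio.mpr h), max_eq_left (by linarith)]
    · rw [Set.indicator_of_notMem (Set.notMem_Iio.mpr (not_lt.mp h)), max_eq_right (by linarith)]
  simp only [as_indicator]
  rw [setIntegral_Ioc_indicator_Iio (by linarith) hT,
    intervalIntegral.integral_sub (by simp) ((by fun_prop : Continuous _).intervalIntegrable _ _)]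
  simp only [intervalIntegral.integral_const, intervalIntegral.integral_div, integral_id,
    smul_eq_mul]
  ring

/-- Marcinkiewicz interpolation, integrated over the level `t`: a weak type bound for the part of
`g` above `t / 2` gives an `ℓ²` bound. -/
lemma sum_sq_le_of_truncated_weak_type {ι κ : Type*} {X : Finset ι} {S : Finset κ} {a : ι → ℝ}
    {b : κ → ℝ} (ha : ∀ x ∈ X, 0 ≤ a x) (hb : ∀ y ∈ S, 0 ≤ b y)
    (weak : ∀ t, 0 < t → t * #{x ∈ X | t < a x} ≤ 2 * ∑ y ∈ S, max (b y - t / 2) 0) :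
    ∑ x ∈ X, a x ^ 2 ≤ 4 * ∑ y ∈ S, b y ^ 2 := by
  let T : ℝ := ∑ x ∈ X, a x + ∑ y ∈ S, 2 * b y
  have hb' : ∀ y ∈ S, 0 ≤ 2 * b y := fun y hy => mul_nonneg zero_le_two (hb y hy)
  have le_T_left : ∀ x ∈ X, a x ≤ T := fun x hx =>
    (single_le_sum ha hx).trans (le_add_of_nonneg_right (sum_nonneg hb'))
  have le_T_right : ∀ y ∈ S, 2 * b y ≤ T := fun y hy =>
    (single_le_sum hb' hy).trans (le_add_of_nonneg_left (sum_nonneg ha))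
  have integrable_left : ∀ x ∈ X,
      IntegrableOn (fun t => (Set.Iio (a x)).indicator (fun t : ℝ => t) t) (Set.Ioc 0 T) :=
    fun x _ => Integrable.indicator
      (continuous_id.integrableOn_Icc.mono_set Set.Ioc_subset_Icc_self) measurableSet_Iio
  have integrable_right : ∀ y ∈ S, IntegrableOn (fun t => 2 * max (b y - t / 2) 0) (Set.Ioc 0 T) :=
    fun y _ => ((by fun_prop : Continuous _).integrableOn_Icc).mono_set Set.Ioc_subset_Icc_self
  have pointwise (t : ℝ) (ht : t ∈ Set.Ioc 0 T) :
      ∑ x ∈ X, (Set.Iio (a x)).indicator (fun t : ℝ => t) t ≤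
        ∑ y ∈ S, 2 * max (b y - t / 2) 0 := by
    rw [← mul_sum]
    refine le_of_eq_of_le ?_ (weak t ht.1)
    rw [card_filter, Nat.cast_sum, mul_sum]
    exact sum_congr rfl fun x _ => by simp [Set.indicator_apply]
  have integrated := setIntegral_mono_on (integrable_finsetSum X integrable_left)
    (integrable_finsetSum S integrable_right) measurableSet_Ioc pointwise
  rw [integral_finsetSum _ integrable_left, integral_finsetSum _ integrable_right,
    sum_congr rfl fun x hx => setIntegral_Ioc_indicator_Iio (ha x hx) (le_T_left x hx) _,
    sum_congr rfl fun y hy => (integral_const_mul _ _).trans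
      (congrArg (2 * ·) (setIntegral_Ioc_max_sub_half (hb y hy) (le_T_right y hy)))] at integrated
  simp only [integral_id, ← mul_sum, ← sum_div, ne_eq, OfNat.ofNat_ne_zero, not_false_eq_true,
    zero_pow, sub_zero] at integrated
  linarith

lemma sum_sq_progressionAvg_le (he : 0 < e) (hg : ∀ y, 0 ≤ g y) (hk : ∀ x ∈ X, 1 ≤ k x) :
    ∑ x ∈ X, progressionAvg e (k x) g x ^ 2 ≤
      4 * ∑ y ∈ X.biUnion fun x => progression e (k x) x, g y ^ 2 := by
  refine sum_sq_le_of_truncated_weak_type (fun x _ => progressionAvg_nonneg hg e (k x) x)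
    (fun y _ => hg y) fun t ht => ?_
  have truncated_average (x : ℤ) (hx : x ∈ {x ∈ X | t < progressionAvg e (k x) g x}) :
      t / 2 * k x ≤ ∑ y ∈ progression e (k x) x, max (g y - t / 2) 0 := by
    obtain ⟨hxX, htx⟩ := mem_filter.mp hx
    rw [progressionAvg, inv_mul_eq_div, lt_div_iff₀ (Nat.cast_pos.mpr (hk x hxX))] at htx
    refine le_trans ?_ (sum_le_sum fun y _ => le_max_left (g y - t / 2) 0)
    rw [sum_sub_distrib, sum_const, card_progression he, nsmul_eq_mul]
    linarith
  have weak := mul_card_le_sum_biUnion_progression he (fun y => le_max_right (g y - t / 2) 0)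
    (half_pos ht).le (fun x hx => hk x (filter_subset _ _ hx)) truncated_average
  have enlarge := sum_le_sum_of_subset_of_nonneg
    (biUnion_subset_biUnion_of_subset_left (fun x => progression e (k x) x)
      (filter_subset (fun x => t < progressionAvg e (k x) g x) X))
    fun y _ _ => le_max_right (g y - t / 2) 0
  linarith

end MaximalFunction

section SquareNorm

variable {ι : Type*} {f g : ι → ℝ}

/-- The squared `ℓ²` norm `‖f‖² = ∑ x, f x ^ 2`; it is used only for finitely supported `f`, so
that the sum converges. -/
noncomputable def sqNorm (f : ι → ℝ) : ℝ := ∑' x, f x ^ 2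

lemma sqNorm_nonneg (f : ι → ℝ) : 0 ≤ sqNorm f := tsum_nonneg fun _ => sq_nonneg _

lemma tsum_mul_self (f : ι → ℝ) : ∑' x, f x * f x = sqNorm f := by simp only [sqNorm, pow_two]

lemma sqNorm_const_mul (c : ℝ) (f : ι → ℝ) : sqNorm (fun x => c * f x) = c ^ 2 * sqNorm f := by
  simp only [sqNorm, mul_pow, tsum_mul_left]

lemma sqNorm_comp_add_right (f : ℤ → ℝ) (m : ℤ) : sqNorm (fun x => f (x + m)) = sqNorm f :=
  (Equiv.addRight m).tsum_eq fun x => f x ^ 2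

lemma summable_sq_of_hasFiniteSupport (hf : f.HasFiniteSupport) : Summable fun x => f x ^ 2 := by
  simp only [pow_two]
  exact summable_of_hasFiniteSupport (by fun_prop)

lemma sum_sq_le_sqNorm (hf : f.HasFiniteSupport) (S : Finset ι) :
    ∑ x ∈ S, f x ^ 2 ≤ sqNorm f :=
  (summable_sq_of_hasFiniteSupport hf).sum_le_tsum S fun _ _ => sq_nonneg _

lemma tsum_mul_le (hf : f.HasFiniteSupport) (hg : g.HasFiniteSupport) :
    ∑' x, f x * g x ≤ (sqNorm f + sqNorm g) / 2 := by
  have hf2 := summable_sq_of_hasFiniteSupport hf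
  have hg2 := summable_sq_of_hasFiniteSupport hg
  rw [sqNorm, sqNorm, ← hf2.tsum_add hg2, ← tsum_div_const]
  exact (summable_of_hasFiniteSupport (by fun_prop)).tsum_le_tsum
    (fun x => by linarith [two_mul_le_add_sq (f x) (g x)]) ((hf2.add hg2).div_const 2)

lemma abs_tsum_mul_le (hf : f.HasFiniteSupport) (hg : g.HasFiniteSupport) :
    |∑' x, f x * g x| ≤ (sqNorm f + sqNorm g) / 2 := by
  refine abs_le'.mpr ⟨tsum_mul_le hf hg, ?_⟩
  have h := tsum_mul_le hf.fun_neg hg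
  simpa only [neg_mul, tsum_neg, sqNorm, even_two.neg_pow] using h

/-- Duality: an upper bound `R` for the Gram form of the `u s` bounds the inner products of `f`
with the `u s`. -/
lemma sum_le_mul_sqNorm_of_sum_tsum_mul_le {κ : Type*} {B : Finset κ} {u : κ → ι → ℝ} {G : κ → ℝ}
    {R : ℝ} (hf : f.HasFiniteSupport) (hu : ∀ s, (u s).HasFiniteSupport) (hR : 0 < R)
    (hG : ∀ s ∈ B, ∑' x, f x * u s x = G s)
    (hcorr : ∑ s ∈ B, ∑ t ∈ B, ∑' x, u s x * u t x ≤ R * ∑ s ∈ B, G s) :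
    ∑ s ∈ B, G s ≤ R * sqNorm f := by
  have hU : (fun x => ∑ s ∈ B, u s x).HasFiniteSupport := by fun_prop
  have norm_U : sqNorm (fun x => ∑ s ∈ B, u s x) = ∑ s ∈ B, ∑ t ∈ B, ∑' x, u s x * u t x := by
    simp only [sqNorm, pow_two, sum_mul_sum]
    rw [Summable.tsum_finsetSum fun s _ => summable_of_hasFiniteSupport (by fun_prop)]
    exact sum_congr rfl fun s _ =>
      Summable.tsum_finsetSum fun t _ => summable_of_hasFiniteSupport (by fun_prop)
  have inner_U : ∑' x, R * f x * ∑ s ∈ B, u s x = R * ∑ s ∈ B, G s := by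
    simp only [mul_assoc, mul_sum]
    rw [Summable.tsum_finsetSum fun s _ => summable_of_hasFiniteSupport (by fun_prop)]
    exact sum_congr rfl fun s hs => by rw [tsum_mul_left, hG s hs]
  have h := tsum_mul_le (f := fun x => R * f x) (by fun_prop) hU
  rw [inner_U, norm_U, sqNorm_const_mul] at h
  exact le_of_mul_le_mul_left (by linarith : R * _ ≤ R * _) hR

end SquareNorm

section LargeSieve

/-- The average of `f` over a window of length `H`, weighted by a Ramanujan sum. -/
noncomputable def ramanujanAvg (s : Finset Nat.Primes) (H : ℕ) (f : ℤ → ℝ) (x : ℤ) : ℝ :=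
  (H : ℝ)⁻¹ * ∑ m ∈ Ico (0 : ℤ) H, ramanujan s m * f (x + m)

/-- The adjoint of the operator `ramanujanAvg s H`. -/
noncomputable def ramanujanAvgAdjoint (s : Finset Nat.Primes) (H : ℕ) (g : ℤ → ℝ) (x : ℤ) : ℝ :=
  (H : ℝ)⁻¹ * ∑ m ∈ Ico (0 : ℤ) H, ramanujan s m * g (x - m)

variable {f g k : ℤ → ℝ} {s t : Finset Nat.Primes} {H K : ℕ}

lemma hasFiniteSupport_comp_add_right (hf : f.HasFiniteSupport) (m : ℤ) :
    (fun x => f (x + m)).HasFiniteSupport :=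
  hf.fun_comp_of_injective (add_left_injective m)

lemma hasFiniteSupport_comp_sub_right (hf : f.HasFiniteSupport) (m : ℤ) :
    (fun x => f (x - m)).HasFiniteSupport :=
  hf.fun_comp_of_injective (sub_left_injective (b := m))

lemma hasFiniteSupport_ramanujanAvg (hf : f.HasFiniteSupport) (s : Finset Nat.Primes) (H : ℕ) :
    (ramanujanAvg s H f).HasFiniteSupport := by
  unfold ramanujanAvg
  exact (HasFiniteSupport.sum
    (fun m => (hasFiniteSupport_comp_add_right hf m).fun_mul_right _) _).fun_mul_right _

lemma hasFiniteSupport_ramanujanAvgAdjoint (hg : g.HasFiniteSupport) (s : Finset Nat.Primes)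
    (H : ℕ) : (ramanujanAvgAdjoint s H g).HasFiniteSupport := by
  unfold ramanujanAvgAdjoint
  exact (HasFiniteSupport.sum
    (fun m => (hasFiniteSupport_comp_sub_right hg m).fun_mul_right _) _).fun_mul_right _

lemma tsum_mul_ramanujanAvgAdjoint (hf : f.HasFiniteSupport) (g : ℤ → ℝ) (s : Finset Nat.Primes)
    (H : ℕ) : ∑' x, f x * ramanujanAvgAdjoint s H g x = ∑' x, ramanujanAvg s H f x * g x := by
  have expand_avg (x : ℤ) : ramanujanAvg s H f x * g x =
      ∑ m ∈ Ico (0 : ℤ) H, (H : ℝ)⁻¹ * ramanujan s m * (f (x + m) * g x) := by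
    rw [ramanujanAvg, mul_sum, sum_mul]
    exact sum_congr rfl fun m _ => by ring
  have expand_adjoint (x : ℤ) : f x * ramanujanAvgAdjoint s H g x =
      ∑ m ∈ Ico (0 : ℤ) H, (H : ℝ)⁻¹ * ramanujan s m * (f x * g (x - m)) := by
    rw [ramanujanAvgAdjoint, mul_sum, mul_sum]
    exact sum_congr rfl fun m _ => by ring
  simp only [expand_avg, expand_adjoint]
  rw [Summable.tsum_finsetSum fun m _ => summable_of_hasFiniteSupport
      (((hasFiniteSupport_comp_add_right hf m).fun_mul_left _).fun_mul_right _),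
    Summable.tsum_finsetSum fun m _ => summable_of_hasFiniteSupport
      ((hf.fun_mul_left _).fun_mul_right _)]
  refine sum_congr rfl fun m _ => ?_
  rw [← (Equiv.addRight m).tsum_eq]
  simp only [Equiv.coe_addRight, add_sub_cancel_right]

lemma tsum_ramanujanAvgAdjoint_mul_ramanujanAvgAdjoint (hg : g.HasFiniteSupport) (k : ℤ → ℝ)
    (s t : Finset Nat.Primes) (H K : ℕ) :
    ∑' x, ramanujanAvgAdjoint s H g x * ramanujanAvgAdjoint t K k x = (H : ℝ)⁻¹ * (K : ℝ)⁻¹ *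
      ∑ m ∈ Ico (0 : ℤ) H, ∑ n ∈ Ico (0 : ℤ) K,
        ramanujan s m * ramanujan t n * ∑' x, g x * k (x + (m - n)) := by
  have expand (x : ℤ) : ramanujanAvgAdjoint s H g x * ramanujanAvgAdjoint t K k x =
      ∑ m ∈ Ico (0 : ℤ) H, ∑ n ∈ Ico (0 : ℤ) K,
        ((H : ℝ)⁻¹ * (K : ℝ)⁻¹ * (ramanujan s m * ramanujan t n)) * (g (x - m) * k (x - n)) := by
    rw [ramanujanAvgAdjoint, ramanujanAvgAdjoint, mul_mul_mul_comm, sum_mul_sum, mul_sum]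
    refine sum_congr rfl fun m _ => ?_
    rw [mul_sum]
    exact sum_congr rfl fun n _ => by ring
  simp only [expand]
  have term_support (m n : ℤ) (c : ℝ) :
      (fun x => c * (g (x - m) * k (x - n))).HasFiniteSupport :=
    ((hasFiniteSupport_comp_sub_right hg m).fun_mul_left _).fun_mul_right _
  rw [Summable.tsum_finsetSum fun m _ => summable_of_hasFiniteSupport
    (HasFiniteSupport.sum (fun n => term_support m n _) _), mul_sum]
  refine sum_congr rfl fun m _ => ?_
  rw [Summable.tsum_finsetSum fun n _ => summable_of_hasFiniteSupport (term_support m n _),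
    mul_sum]
  refine sum_congr rfl fun n _ => ?_
  rw [tsum_mul_left, ← (Equiv.addRight m).tsum_eq, mul_assoc]
  simp only [Equiv.coe_addRight, add_sub_cancel_right, add_sub_assoc]

lemma abs_tsum_mul_comp_add_right_le (hg : g.HasFiniteSupport) (hk : k.HasFiniteSupport) (r : ℤ) :
    |∑' x, g x * k (x + r)| ≤ (sqNorm g + sqNorm k) / 2 := by
  simpa only [sqNorm_comp_add_right] using
    abs_tsum_mul_le hg (hasFiniteSupport_comp_add_right hk r)

lemma sum_Ico_ite_dvd {d : ℕ} (hd : 0 < d) (hH : d ∣ H) :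
    ∑ m ∈ Ico (0 : ℤ) H, (if (d : ℤ) ∣ m then (d : ℝ) else 0) = H := by
  obtain ⟨c, rfl⟩ := hH
  have card_multiples : #{m ∈ Ico (0 : ℤ) ((d * c : ℕ) : ℤ) | (d : ℤ) ∣ m} = c := by
    have h := Int.Ico_filter_dvd_card 0 ((d * c : ℕ) : ℤ) (Nat.cast_pos.mpr hd)
    have hd' : (d : ℚ) ≠ 0 := Nat.cast_ne_zero.mpr hd.ne'
    push_cast at h ⊢
    rw [mul_div_cancel_left₀ _ hd', zero_div, Int.ceil_natCast, Int.ceil_zero] at h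
    lia
  rw [← sum_filter, sum_const, card_multiples, nsmul_eq_mul, Nat.cast_mul, mul_comm]

lemma sum_abs_ramanujan_le (hH : modulus s ∣ H) :
    ∑ m ∈ Ico (0 : ℤ) H, |ramanujan s m| ≤ H * 2 ^ #s := by
  calc ∑ m ∈ Ico (0 : ℤ) H, |ramanujan s m|
      ≤ ∑ m ∈ Ico (0 : ℤ) H, ∑ t ∈ s.powerset,
          (if (modulus t : ℤ) ∣ m then (modulus t : ℝ) else 0) :=
        sum_le_sum fun m _ => abs_ramanujan_le_sum_divisors s m
    _ = ∑ _t ∈ s.powerset, (H : ℝ) := by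
        rw [sum_comm]
        exact sum_congr rfl fun _ ht => sum_Ico_ite_dvd (modulus_pos _)
          ((modulus_dvd_modulus (mem_powerset.mp ht)).trans hH)
    _ = H * 2 ^ #s := by
        rw [sum_const, card_powerset, nsmul_eq_mul, Nat.cast_pow, Nat.cast_ofNat, mul_comm]

lemma sqNorm_ramanujanAvgAdjoint_le (hg : g.HasFiniteSupport) (hH0 : 0 < H)
    (hH : modulus s ∣ H) : sqNorm (ramanujanAvgAdjoint s H g) ≤ 4 ^ #s * sqNorm g := by
  have : (0 : ℝ) < H := Nat.cast_pos.mpr hH0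
  have norm_nonneg := sqNorm_nonneg g
  rw [← tsum_mul_self, tsum_ramanujanAvgAdjoint_mul_ramanujanAvgAdjoint hg, ← pow_two, inv_pow]
  calc (H ^ 2 : ℝ)⁻¹ * ∑ m ∈ Ico (0 : ℤ) H, ∑ n ∈ Ico (0 : ℤ) H,
          ramanujan s m * ramanujan s n * ∑' x, g x * g (x + (m - n))
      ≤ (H ^ 2 : ℝ)⁻¹ * ∑ m ∈ Ico (0 : ℤ) H, ∑ n ∈ Ico (0 : ℤ) H,
          |ramanujan s m| * |ramanujan s n| * sqNorm g := by
        refine mul_le_mul_of_nonneg_left (sum_le_sum fun m _ => sum_le_sum fun n _ => ?_)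
          (by positivity)
        refine (le_abs_self _).trans ?_
        rw [abs_mul, abs_mul]
        refine mul_le_mul_of_nonneg_left ?_ (by positivity)
        linarith [abs_tsum_mul_comp_add_right_le hg hg (m - n)]
    _ = (H ^ 2 : ℝ)⁻¹ * ((∑ m ∈ Ico (0 : ℤ) H, |ramanujan s m|) ^ 2 * sqNorm g) := by
        rw [pow_two (∑ m ∈ _, _), sum_mul_sum]
        simp only [sum_mul]
    _ ≤ (H ^ 2 : ℝ)⁻¹ * ((H * 2 ^ #s) ^ 2 * sqNorm g) := by
        gcongr
        exact sum_abs_ramanujan_le hH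
    _ = 4 ^ #s * sqNorm g := by
        rw [mul_pow, pow_right_comm, mul_assoc, inv_mul_cancel_left₀ (by positivity)]
        norm_num

lemma sum_Ico_sum_Ico_eq_sum_difference (F : ℤ → ℤ → ℝ) (H K : ℕ) :
    ∑ m ∈ Ico (0 : ℤ) H, ∑ n ∈ Ico (0 : ℤ) K, F m n =
      ∑ r ∈ Ico (-K : ℤ) H, ∑ n ∈ Ico (max 0 (-r)) (min (K : ℤ) (H - r)), F (n + r) n := by
  rw [sum_comm, sum_comm' (s := Ico (-K : ℤ) H) (t' := Ico (0 : ℤ) K)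
    (s' := fun n => Ico (0 - n) (H - n)) fun r n => by simp only [mem_Ico]; lia]
  refine sum_congr rfl fun n _ => ?_
  simp only [add_comm n, sum_Ico_add' (F · n), sub_add_cancel]

lemma abs_sum_ramanujan_mul_ramanujan_le (hst : s ≠ t) (r a b : ℤ) :
    |∑ n ∈ Ico a b, ramanujan s (n + r) * ramanujan t n| ≤ ((modulus s : ℝ) * modulus t) ^ 2 := by
  have hs : (modulus s : ℤ) ∣ modulus s * modulus t := dvd_mul_right _ _
  have ht : (modulus t : ℤ) ∣ modulus s * modulus t := dvd_mul_left _ _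
  have hpos : (0 : ℤ) < modulus s * modulus t := by
    exact_mod_cast Nat.mul_pos (modulus_pos s) (modulus_pos t)
  have mean_zero := sum_ramanujan_mul_ramanujan_of_ne hst hpos.le hs ht r 0
  simp only [add_zero] at mean_zero
  have bounded (n : ℤ) :
      ‖ramanujan s (n + r) * ramanujan t n‖ ≤ (modulus s : ℝ) * modulus t := by
    rw [Real.norm_eq_abs, abs_mul]
    gcongr <;> exact abs_ramanujan_le_modulus _ _
  refine (norm_sum_Ico_le_of_periodic (fun n => ?_) hpos mean_zero bounded a b).trans_eq ?_
  · simp only [add_right_comm n _ r, periodic_ramanujan hs (n + r), periodic_ramanujan ht n]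
  · push_cast
    ring

lemma abs_sum_sum_ramanujan_mul_le (hst : s ≠ t) {ρ : ℤ → ℝ} {A : ℝ} (hρ : ∀ r, |ρ r| ≤ A)
    (H K : ℕ) :
    |∑ m ∈ Ico (0 : ℤ) H, ∑ n ∈ Ico (0 : ℤ) K, ramanujan s m * ramanujan t n * ρ (m - n)| ≤
      (H + K) * (((modulus s : ℝ) * modulus t) ^ 2 * A) := by
  rw [sum_Ico_sum_Ico_eq_sum_difference]
  simp only [add_sub_cancel_left, ← sum_mul]
  calc _ ≤ ∑ _r ∈ Ico (-K : ℤ) H, ((modulus s : ℝ) * modulus t) ^ 2 * A :=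
      (abs_sum_le_sum_abs _ _).trans <| sum_le_sum fun r _ => by
        rw [abs_mul]
        exact mul_le_mul (abs_sum_ramanujan_mul_ramanujan_le hst r _ _) (hρ r) (abs_nonneg _)
          (by positivity)
    _ = _ := by
      rw [sum_const, Int.card_Ico, nsmul_eq_mul, show ((H : ℤ) - -K).toNat = H + K by lia,
        Nat.cast_add]

lemma tsum_ramanujanAvgAdjoint_mul_le (hg : g.HasFiniteSupport) (hk : k.HasFiniteSupport)
    (hst : s ≠ t) {h D : ℕ} (hh : 0 < h) (hs : modulus s ≤ 2 * D) (ht : modulus t ≤ 2 * D) :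
    ∑' x, ramanujanAvgAdjoint s (modulus s * h) g x * ramanujanAvgAdjoint t (modulus t * h) k x ≤
      16 * D ^ 3 / h * (sqNorm g + sqNorm k) := by
  have hs0 : (0 : ℝ) < modulus s := Nat.cast_pos.mpr (modulus_pos s)
  have ht0 : (0 : ℝ) < modulus t := Nat.cast_pos.mpr (modulus_pos t)
  have : (0 : ℝ) < h := Nat.cast_pos.mpr hh
  have hs' : (modulus s : ℝ) ≤ 2 * D := by exact_mod_cast hs
  have ht' : (modulus t : ℝ) ≤ 2 * D := by exact_mod_cast ht
  have norm_nonneg : 0 ≤ sqNorm g + sqNorm k := add_nonneg (sqNorm_nonneg g) (sqNorm_nonneg k)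
  have correlation := (le_abs_self _).trans (abs_sum_sum_ramanujan_mul_le hst
    (abs_tsum_mul_comp_add_right_le hg hk) (modulus s * h) (modulus t * h))
  rw [tsum_ramanujanAvgAdjoint_mul_ramanujanAvgAdjoint hg]
  push_cast at correlation ⊢
  calc _ ≤ (modulus s * h : ℝ)⁻¹ * (modulus t * h : ℝ)⁻¹ * ((modulus s * h + modulus t * h) *
          (((modulus s : ℝ) * modulus t) ^ 2 * ((sqNorm g + sqNorm k) / 2))) := by gcongr
    _ = (modulus s + modulus t) * (modulus s * modulus t) / h * ((sqNorm g + sqNorm k) / 2) := by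
        field_simp
    _ ≤ (2 * D + 2 * D) * (2 * D * (2 * D)) / h * ((sqNorm g + sqNorm k) / 2) := by gcongr
    _ = 16 * D ^ 3 / h * (sqNorm g + sqNorm k) / 2 * 1 := by ring
    _ ≤ _ := by linarith [mul_nonneg (by positivity : (0 : ℝ) ≤ 16 * D ^ 3 / h) norm_nonneg]

lemma card_le_of_modulus_mem_Ico {B : Finset (Finset Nat.Primes)} {D : ℕ}
    (hB : ∀ s ∈ B, modulus s ∈ Ico D (2 * D)) : #B ≤ D := by
  have h := card_le_card_of_injOn modulus hB modulus_injective.injOn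
  rw [Nat.card_Ico] at h
  lia

lemma sum_sum_ite_eq_add_mul_add {κ : Type*} [DecidableEq κ] (B : Finset κ) (v : κ → ℝ) (Q η : ℝ) :
    ∑ s ∈ B, ∑ t ∈ B, ((if s = t then Q * v s else 0) + η * (v s + v t)) =
      (Q + 2 * #B * η) * ∑ s ∈ B, v s := by
  simp only [sum_add_distrib, sum_ite_eq, ← mul_sum, sum_const, nsmul_eq_mul]
  rw [← sum_filter, filter_mem_eq_inter, inter_self, ← mul_sum]
  ring

/-- The large sieve for Ramanujan sums, in its dual form. -/
lemma sum_sqNorm_ramanujanAvg_le (hf : f.HasFiniteSupport) {B : Finset (Finset Nat.Primes)}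
    {D : ℕ} (hB : ∀ s ∈ B, modulus s ∈ Ico D (2 * D)) {Q : ℝ} (hQ0 : 0 ≤ Q)
    (hQ : ∀ s ∈ B, 4 ^ #s ≤ Q) :
    ∑ s ∈ B, sqNorm (ramanujanAvg s (modulus s * (32 * D ^ 4)) f) ≤ (Q + 1) * sqNorm f := by
  rcases D.eq_zero_or_pos with rfl | hD
  · rw [card_eq_zero.mp (Nat.le_zero.mp (card_le_of_modulus_mem_Ico hB)), sum_empty]
    exact mul_nonneg (by linarith) (sqNorm_nonneg f)
  have hh : 0 < 32 * D ^ 4 := by positivity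
  let g s := ramanujanAvg s (modulus s * (32 * D ^ 4)) f
  let u s := ramanujanAvgAdjoint s (modulus s * (32 * D ^ 4)) (g s)
  have hg (s) : (g s).HasFiniteSupport := hasFiniteSupport_ramanujanAvg hf _ _
  have hu (s) : (u s).HasFiniteSupport := hasFiniteSupport_ramanujanAvgAdjoint (hg s) _ _
  refine sum_le_mul_sqNorm_of_sum_tsum_mul_le hf hu (by linarith) (fun s _ => ?_) ?_
  · rw [tsum_mul_ramanujanAvgAdjoint hf, tsum_mul_self]
  let η : ℝ := 16 * D ^ 3 / (32 * D ^ 4 : ℕ)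
  have pairwise (s) (hs : s ∈ B) (t) (ht : t ∈ B) : ∑' x, u s x * u t x ≤
      (if s = t then Q * sqNorm (g s) else 0) + η * (sqNorm (g s) + sqNorm (g t)) := by
    split_ifs with hst
    · subst hst
      have diagonal := sqNorm_ramanujanAvgAdjoint_le (hg s) (Nat.mul_pos (modulus_pos s) hh)
        (dvd_mul_right (modulus s) (32 * D ^ 4))
      rw [← tsum_mul_self] at diagonal
      have norm_nonneg := sqNorm_nonneg (g s)
      refine diagonal.trans (le_add_of_le_of_nonneg ?_ (by positivity))
      exact mul_le_mul_of_nonneg_right (hQ s hs) norm_nonneg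
    · rw [zero_add]
      exact tsum_ramanujanAvgAdjoint_mul_le (hg s) (hg t) hst hh (mem_Ico.mp (hB s hs)).2.le
        (mem_Ico.mp (hB t ht)).2.le
  have η_small : 2 * #B * η ≤ 1 := by
    have : (0 : ℝ) < D := Nat.cast_pos.mpr hD
    have hcard : (#B : ℝ) ≤ D := Nat.cast_le.mpr (card_le_of_modulus_mem_Ico hB)
    calc 2 * #B * η ≤ 2 * D * η := by gcongr
      _ = 1 := by
        simp only [η]
        push_cast
        field_simp
        norm_num
  have norm_nonneg : 0 ≤ ∑ s ∈ B, sqNorm (g s) := sum_nonneg fun s _ => sqNorm_nonneg (g s)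
  calc ∑ s ∈ B, ∑ t ∈ B, ∑' x, u s x * u t x
      ≤ ∑ s ∈ B, ∑ t ∈ B,
          ((if s = t then Q * sqNorm (g s) else 0) + η * (sqNorm (g s) + sqNorm (g t))) :=
        sum_le_sum fun s hs => sum_le_sum fun t ht => pairwise s hs t ht
    _ = (Q + 2 * #B * η) * ∑ s ∈ B, sqNorm (g s) :=
        sum_sum_ite_eq_add_mul_add B (fun s => sqNorm (g s)) Q η
    _ ≤ (Q + 1) * ∑ s ∈ B, sqNorm (g s) := by gcongr

end LargeSieve

section RamanujanCorrelations

lemma sum_Icc_natCast {A : Type*} [AddCommMonoid A] (F : ℤ → A) (N : ℕ) :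
    ∑ n ∈ Icc 1 N, F n = ∑ m ∈ Ico (1 : ℤ) (N + 1), F m :=
  sum_bij' (fun n _ => (n : ℤ)) (fun m _ => m.toNat) (fun n hn => by simp at hn ⊢; lia)
    (fun m hm => by simp at hm ⊢; lia) (fun _ _ => Int.toNat_natCast _)
    (fun m hm => by simp at hm; lia) fun _ _ => rfl

lemma norm_sum_Ico_le {E : Type*} [SeminormedAddCommGroup E] {F : ℤ → E} {B : ℝ}
    (hB : ∀ n, ‖F n‖ ≤ B) (a : ℤ) (m : ℕ) : ‖∑ k ∈ Ico a (a + m), F k‖ ≤ m * B := by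
  calc ‖∑ k ∈ Ico a (a + m), F k‖ ≤ ∑ _k ∈ Ico a (a + m), B := norm_sum_le_of_le _ fun k _ => hB k
    _ = m * B := by rw [sum_const, Int.card_Ico, add_sub_cancel_left, Int.toNat_natCast,
      nsmul_eq_mul]

lemma norm_sum_Ico_add_sub_sum_Ico_le {E : Type*} [SeminormedAddCommGroup E] {F : ℤ → E} {B : ℝ}
    (hB : ∀ n, ‖F n‖ ≤ B) {a b : ℤ} (hab : a ≤ b) (m : ℕ) :
    ‖∑ k ∈ Ico (a + m) (b + m), F k - ∑ k ∈ Ico a b, F k‖ ≤ 2 * (m * B) := by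
  have split_left := sum_Ico_add_sum_Ico F (a := a) (b := a + m) (c := b + m) (by lia) (by lia)
  have split_right := sum_Ico_add_sum_Ico F (a := a) (b := b) (c := b + m) hab (by lia)
  have difference : ∑ k ∈ Ico (a + m) (b + m), F k - ∑ k ∈ Ico a b, F k =
      ∑ k ∈ Ico b (b + m), F k - ∑ k ∈ Ico a (a + m), F k := by
    rw [sub_eq_sub_iff_add_eq_add, add_comm, split_left, ← split_right, add_comm]
  rw [difference]
  linarith [norm_sub_le (∑ k ∈ Ico b (b + m), F k) (∑ k ∈ Ico a (a + m), F k),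
    norm_sum_Ico_le hB b m, norm_sum_Ico_le hB a m]

/-- The correlation of the Ramanujan sum of modulus `modulus s` with `f` on `(x, x + N]`. -/
noncomputable def ramanujanCorrelation (s : Finset Nat.Primes) (N : ℕ) (f : ℤ → ℝ) (x : ℤ) : ℝ :=
  ∑ n ∈ Icc 1 N, ramanujan s n * f (x + n)

variable {s : Finset Nat.Primes} {f g : ℤ → ℝ} {N H : ℕ}

lemma ramanujanCorrelation_eq (hH0 : 0 < H) (hH : modulus s ∣ H) (f : ℤ → ℝ) (N : ℕ) (x : ℤ) :
    ramanujanCorrelation s N f x = (H : ℝ)⁻¹ * ∑ m ∈ Ico (0 : ℤ) H, ∑ k ∈ Ico (1 : ℤ) (N + 1),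
      ramanujan s m * ramanujan s (k - m) * f (x + k) := by
  have hH' : (H : ℝ) ≠ 0 := Nat.cast_ne_zero.mpr hH0.ne'
  rw [ramanujanCorrelation, sum_Icc_natCast fun n => ramanujan s n * f (x + n), sum_comm, mul_sum]
  refine sum_congr rfl fun k _ => ?_
  have convolution := sum_ramanujan_mul_ramanujan_sub (Int.natCast_nonneg H)
    (Int.natCast_dvd_natCast.mpr hH) k
  rw [← sum_mul, convolution, Int.cast_natCast, mul_assoc, inv_mul_cancel_left₀ hH']

lemma ramanujanCorrelation_ramanujanAvg (s : Finset Nat.Primes) (H N : ℕ) (f : ℤ → ℝ) (x : ℤ) :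
    ramanujanCorrelation s N (ramanujanAvg s H f) x = (H : ℝ)⁻¹ * ∑ m ∈ Ico (0 : ℤ) H,
      ∑ k ∈ Ico (1 + m) (N + 1 + m), ramanujan s m * ramanujan s (k - m) * f (x + k) := by
  rw [ramanujanCorrelation,
    sum_Icc_natCast fun n => ramanujan s n * ramanujanAvg s H f (x + n)]
  simp only [ramanujanAvg, mul_sum]
  rw [sum_comm]
  refine sum_congr rfl fun m _ => ?_
  rw [← sum_Ico_add']
  refine sum_congr rfl fun n _ => ?_
  rw [add_sub_cancel_right, add_assoc]
  ring

lemma abs_ramanujanCorrelation_ramanujanAvg_sub_le (hH0 : 0 < H) (hH : modulus s ∣ H)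
    (hf : ∀ x, |f x| ≤ 1) (N : ℕ) (x : ℤ) :
    |ramanujanCorrelation s N (ramanujanAvg s H f) x - ramanujanCorrelation s N f x| ≤
      2 * H * (modulus s : ℝ) ^ 2 := by
  have : (0 : ℝ) < H := Nat.cast_pos.mpr hH0
  have bounded (m k : ℤ) :
      ‖ramanujan s m * ramanujan s (k - m) * f (x + k)‖ ≤ (modulus s : ℝ) ^ 2 := by
    rw [norm_mul, norm_mul, pow_two, ← mul_one ((modulus s : ℝ) * modulus s)]
    exact mul_le_mul (mul_le_mul (abs_ramanujan_le_modulus s m) (abs_ramanujan_le_modulus s _)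
      (norm_nonneg _) (Nat.cast_nonneg _)) (hf _) (norm_nonneg _) (by positivity)
  have boundary (m : ℤ) (hm : m ∈ Ico (0 : ℤ) H) :
      |∑ k ∈ Ico (1 + m) (N + 1 + m), ramanujan s m * ramanujan s (k - m) * f (x + k) -
        ∑ k ∈ Ico (1 : ℤ) (N + 1), ramanujan s m * ramanujan s (k - m) * f (x + k)| ≤
      2 * (H * (modulus s : ℝ) ^ 2) := by
    obtain ⟨hm0, hmH⟩ := mem_Ico.mp hm
    lift m to ℕ using hm0
    have hmH' : (m : ℝ) ≤ H := by exact_mod_cast hmH.le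
    refine (norm_sum_Ico_add_sub_sum_Ico_le (bounded m) (by lia) m).trans ?_
    gcongr
  rw [ramanujanCorrelation_ramanujanAvg, ramanujanCorrelation_eq hH0 hH, ← mul_sub,
    ← sum_sub_distrib, abs_mul, abs_of_nonneg (by positivity : (0 : ℝ) ≤ (H : ℝ)⁻¹)]
  calc _ ≤ (H : ℝ)⁻¹ * ∑ _m ∈ Ico (0 : ℤ) H, 2 * (H * (modulus s : ℝ) ^ 2) :=
        mul_le_mul_of_nonneg_left
          ((abs_sum_le_sum_abs _ _).trans (sum_le_sum boundary)) (by positivity)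
    _ = 2 * H * (modulus s : ℝ) ^ 2 := by
        rw [sum_const, Int.card_Ico, sub_zero, Int.toNat_natCast, nsmul_eq_mul]
        field_simp

lemma sum_Icc_ite_dvd {A : Type*} [AddCommMonoid A] {d : ℕ} (hd : 0 < d) (N : ℕ) (G : ℤ → A) :
    ∑ n ∈ Icc 1 N, (if (d : ℤ) ∣ n then G n else 0) = ∑ i ∈ Icc 1 (N / d), G (d * i) := by
  rw [← sum_filter]
  symm
  refine sum_nbij (d * ·) (fun i hi => ?_) (fun i _ j _ h => Nat.eq_of_mul_eq_mul_left hd h)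
    (fun n hn => ?_) fun i _ => by rw [Nat.cast_mul]
  · rw [mem_Icc, Nat.le_div_iff_mul_le hd] at hi
    rw [mem_filter, mem_Icc, Int.natCast_dvd_natCast]
    exact ⟨⟨Nat.mul_pos hd hi.1, by lia⟩, dvd_mul_right _ _⟩
  · rw [mem_coe, mem_filter, mem_Icc, Int.natCast_dvd_natCast] at hn
    obtain ⟨⟨hn1, hnN⟩, i, rfl⟩ := hn
    refine ⟨i, ?_, rfl⟩
    rw [mem_coe, mem_Icc, Nat.le_div_iff_mul_le hd]
    exact ⟨Nat.pos_of_mul_pos_left hn1, by lia⟩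

lemma abs_ramanujanCorrelation_le (s : Finset Nat.Primes) (N : ℕ) (g : ℤ → ℝ) (x : ℤ) :
    |ramanujanCorrelation s N g x| ≤ ∑ t ∈ s.powerset,
      (modulus t : ℝ) * ∑ y ∈ progression (modulus t) (N / modulus t) x, |g y| := by
  calc |ramanujanCorrelation s N g x|
      ≤ ∑ n ∈ Icc 1 N, ∑ t ∈ s.powerset,
          (if (modulus t : ℤ) ∣ (n : ℤ) then (modulus t : ℝ) * |g (x + n)| else 0) := by
        refine (abs_sum_le_sum_abs _ _).trans (sum_le_sum fun n _ => ?_)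
        rw [abs_mul]
        refine (mul_le_mul_of_nonneg_right (abs_ramanujan_le_sum_divisors s n)
          (abs_nonneg _)).trans_eq ?_
        simp only [sum_mul, ite_mul, zero_mul]
    _ = _ := by
        rw [sum_comm]
        refine sum_congr rfl fun t _ => ?_
        rw [sum_Icc_ite_dvd (modulus_pos t) N fun n => (modulus t : ℝ) * |g (x + n)|,
          sum_progression (modulus_pos t), mul_sum]

lemma abs_ramanujanCorrelation_div_le (hN : modulus s ≤ N) (g : ℤ → ℝ) (x : ℤ) :
    |ramanujanCorrelation s N g x| / N ≤
      ∑ t ∈ s.powerset, progressionAvg (modulus t) (N / modulus t) (fun y => |g y|) x := by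
  have hN0 : (0 : ℝ) < N := Nat.cast_pos.mpr ((modulus_pos s).trans_le hN)
  rw [div_le_iff₀ hN0, sum_mul]
  refine (abs_ramanujanCorrelation_le s N g x).trans (sum_le_sum fun t ht => ?_)
  have hk : 0 < N / modulus t :=
    Nat.div_pos ((modulus_le_modulus (mem_powerset.mp ht)).trans hN) (modulus_pos t)
  have hk' : (0 : ℝ) < (N / modulus t : ℕ) := Nat.cast_pos.mpr hk
  have hmul : (modulus t : ℝ) * (N / modulus t : ℕ) ≤ N := by
    exact_mod_cast Nat.mul_div_le N (modulus t)
  rw [progressionAvg, mul_right_comm, inv_mul_eq_div]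
  refine mul_le_mul_of_nonneg_right ?_ (sum_nonneg fun _ _ => abs_nonneg _)
  rwa [le_div_iff₀ hk']

lemma sum_sq_ramanujanCorrelation_div_le (hg : g.HasFiniteSupport) {N : ℤ → ℕ} {X : Finset ℤ}
    (hX : ∀ x ∈ X, modulus s ≤ N x) :
    ∑ x ∈ X, (|ramanujanCorrelation s (N x) g x| / N x) ^ 2 ≤ 4 * 4 ^ #s * sqNorm g := by
  have divisor_bound (t) (ht : t ∈ s.powerset) :
      ∑ x ∈ X, progressionAvg (modulus t) (N x / modulus t) (fun y => |g y|) x ^ 2 ≤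
        4 * sqNorm g := by
    have hpos : ∀ x ∈ X, 1 ≤ N x / modulus t := fun x hx =>
      Nat.div_pos ((modulus_le_modulus (mem_powerset.mp ht)).trans (hX x hx)) (modulus_pos t)
    refine (sum_sq_progressionAvg_le (modulus_pos t) (fun y => abs_nonneg (g y)) hpos).trans ?_
    simp only [sq_abs]
    exact mul_le_mul_of_nonneg_left (sum_sq_le_sqNorm hg _) zero_le_four
  calc ∑ x ∈ X, (|ramanujanCorrelation s (N x) g x| / N x) ^ 2
      ≤ ∑ x ∈ X, #s.powerset * ∑ t ∈ s.powerset,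
          progressionAvg (modulus t) (N x / modulus t) (fun y => |g y|) x ^ 2 :=
        sum_le_sum fun x hx => (pow_le_pow_left₀ (by positivity)
          (abs_ramanujanCorrelation_div_le (hX x hx) g x) 2).trans sq_sum_le_card_mul_sum_sq
    _ = #s.powerset * ∑ t ∈ s.powerset, ∑ x ∈ X,
          progressionAvg (modulus t) (N x / modulus t) (fun y => |g y|) x ^ 2 := by
        rw [← mul_sum, sum_comm]
    _ ≤ #s.powerset * ∑ _t ∈ s.powerset, 4 * sqNorm g := by
        gcongr with t ht
        exact divisor_bound t ht
    _ = 4 * 4 ^ #s * sqNorm g := by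
        rw [sum_const, nsmul_eq_mul, card_powerset, show (4 : ℝ) ^ #s = 2 ^ #s * 2 ^ #s by
          rw [← mul_pow]; norm_num]
        push_cast
        ring

end RamanujanCorrelations

section HighModuli

lemma exists_pow_card_le_mul_modulus_rpow {K δ : ℝ} (hK : 1 ≤ K) (hδ : 0 < δ) :
    ∃ C : ℝ, 1 ≤ C ∧ ∀ s, K ^ #s ≤ C * (modulus s : ℝ) ^ δ := by
  obtain ⟨M, hM⟩ := Filter.eventually_atTop.mp
    (((tendsto_rpow_atTop hδ).comp tendsto_natCast_atTop_atTop).eventually_ge_atTop K)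
  refine ⟨K ^ M, one_le_pow₀ hK, fun s => ?_⟩
  have small_primes : #{p ∈ s | p.1 < M} ≤ M := by
    have h := card_le_card_of_injOn (s := {p ∈ s | p.1 < M}) (t := range M)
      (fun p : Nat.Primes => (p : ℕ)) (fun p hp => mem_coe.mpr (mem_range.mpr
        (mem_filter.mp hp).2)) Nat.Primes.coe_nat_injective.injOn
    rwa [card_range] at h
  calc K ^ #s = ∏ _p ∈ s, K := (prod_const K).symm
    _ ≤ ∏ p ∈ s, (if (p : ℕ) < M then K else 1) * ((p : ℕ) : ℝ) ^ δ := by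
        refine prod_le_prod (fun _ _ => by linarith) fun p _ => ?_
        have hp : (1 : ℝ) ≤ ((p : ℕ) : ℝ) ^ δ :=
          Real.one_le_rpow (Nat.one_le_cast.mpr p.2.one_lt.le) hδ.le
        split_ifs with h
        · exact le_mul_of_one_le_right (by linarith) hp
        · rw [one_mul]
          exact hM p (not_lt.mp h)
    _ = K ^ #{p ∈ s | p.1 < M} * (modulus s : ℝ) ^ δ := by
        rw [prod_mul_distrib, ← prod_filter, prod_const,
          Real.finsetProd_rpow _ _ fun _ _ => Nat.cast_nonneg _, modulus, Nat.cast_prod]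
    _ ≤ K ^ M * (modulus s : ℝ) ^ δ := by gcongr

lemma sum_modulus_rpow_neg_le (S : Finset (Finset Nat.Primes)) {δ : ℝ} (hδ : 1 < δ) :
    ∑ s ∈ S, (modulus s : ℝ) ^ (-δ) ≤ ∑' n : ℕ, (n : ℝ) ^ (-δ) := by
  rw [← sum_image (f := fun n : ℕ => (n : ℝ) ^ (-δ)) modulus_injective.injOn]
  exact (Real.summable_nat_rpow.mpr (by linarith)).sum_le_tsum _ fun n _ => by positivity

/-- The window length used at the modulus `modulus s`; it depends on the dyadic block of the
modulus, so that `sum_sqNorm_ramanujanAvg_le` applies to each block. -/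
def window (s : Finset Nat.Primes) : ℕ := modulus s * (32 * (2 ^ Nat.log 2 (modulus s)) ^ 4)

/-- The normalised correlation of `f` with the Ramanujan sum of modulus `modulus s`, after `f` is
replaced by its local Ramanujan average; it is cut off to `modulus s ≤ N`. -/
noncomputable def localCorrelation (s : Finset Nat.Primes) (N : ℕ) (f : ℤ → ℝ) (x : ℤ) : ℝ :=
  if modulus s ≤ N then |ramanujanCorrelation s N (ramanujanAvg s (window s) f) x| / N else 0

variable {s : Finset Nat.Primes} {f : ℤ → ℝ} {N : ℕ}

lemma window_pos (s : Finset Nat.Primes) : 0 < window s :=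
  Nat.mul_pos (modulus_pos s) (by positivity)

lemma window_le (s : Finset Nat.Primes) : window s ≤ 32 * modulus s ^ 5 := by
  calc window s ≤ modulus s * (32 * modulus s ^ 4) := by
        unfold window
        gcongr
        exact Nat.pow_log_le_self 2 (modulus_pos s).ne'
    _ = 32 * modulus s ^ 5 := by ring

lemma localCorrelation_nonneg (s : Finset Nat.Primes) (N : ℕ) (f : ℤ → ℝ) (x : ℤ) :
    0 ≤ localCorrelation s N f x := by
  unfold localCorrelation
  split_ifs <;> positivity

lemma sum_sq_localCorrelation_le (hf : f.HasFiniteSupport) (s : Finset Nat.Primes) (N : ℤ → ℕ)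
    (X : Finset ℤ) : ∑ x ∈ X, localCorrelation s (N x) f x ^ 2 ≤
      4 * 4 ^ #s * sqNorm (ramanujanAvg s (window s) f) := by
  refine le_trans (le_of_eq ?_) (sum_sq_ramanujanCorrelation_div_le
    (hasFiniteSupport_ramanujanAvg hf s (window s)) (X := {x ∈ X | modulus s ≤ N x})
    fun x hx => (mem_filter.mp hx).2)
  simp only [sum_filter, localCorrelation, ite_pow, zero_pow two_ne_zero]

lemma abs_ramanujanCorrelation_div_le_localCorrelation (hf : ∀ x, |f x| ≤ 1)
    (hN : modulus s ≤ N) (x : ℤ) :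
    |ramanujanCorrelation s N f x| / N ≤
      localCorrelation s N f x + 64 * (modulus s : ℝ) ^ 7 / N := by
  have error := abs_ramanujanCorrelation_ramanujanAvg_sub_le (window_pos s) (dvd_mul_right _ _)
    hf N x
  have error_le : 2 * (window s : ℝ) * modulus s ^ 2 ≤ 64 * (modulus s : ℝ) ^ 7 := by
    have h : 2 * window s * modulus s ^ 2 ≤ 64 * modulus s ^ 7 := by
      calc _ ≤ 2 * (32 * modulus s ^ 5) * modulus s ^ 2 := by
            gcongr
            exact window_le s
        _ = _ := by ring
    exact_mod_cast h
  rw [localCorrelation, if_pos hN, ← add_div]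
  gcongr
  rw [abs_sub_comm] at error
  linarith [(abs_sub_abs_le_abs_sub _ _).trans error]

lemma exists_sum_weight_le : ∃ C : ℝ, 0 < C ∧ ∀ (S : Finset (Finset Nat.Primes)) (z : ℝ), 0 < z →
    (∀ s ∈ S, z ≤ modulus s) → ∑ s ∈ S, ((8 : ℝ) ^ #s / modulus s) ^ 2 *
      (modulus s : ℝ) ^ (1 / 2 : ℝ) ≤ C * z ^ (-(1 / 8) : ℝ) := by
  obtain ⟨C, hC1, hC⟩ := exists_pow_card_le_mul_modulus_rpow (K := 64) (δ := 1 / 4) (by norm_num)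
    (by norm_num)
  let T := ∑' n : ℕ, (n : ℝ) ^ (-(9 / 8) : ℝ)
  have : 0 ≤ T := tsum_nonneg fun n => by positivity
  refine ⟨C * (T + 1), by positivity, fun S z hz hS => ?_⟩
  have term_le (s) (hs : s ∈ S) : ((8 : ℝ) ^ #s / modulus s) ^ 2 * (modulus s : ℝ) ^ (1 / 2 : ℝ) ≤
      C * z ^ (-(1 / 8) : ℝ) * (modulus s : ℝ) ^ (-(9 / 8) : ℝ) := by
    have hq : (0 : ℝ) < modulus s := Nat.cast_pos.mpr (modulus_pos s)
    calc ((8 : ℝ) ^ #s / modulus s) ^ 2 * (modulus s : ℝ) ^ (1 / 2 : ℝ)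
        = 64 ^ #s * (modulus s : ℝ) ^ (-(3 / 2) : ℝ) := by
          rw [div_pow, pow_right_comm, div_mul_eq_mul_div, mul_div_assoc,
            ← Real.rpow_natCast (modulus s : ℝ), ← Real.rpow_sub hq]
          norm_num
      _ ≤ C * (modulus s : ℝ) ^ (1 / 4 : ℝ) * (modulus s : ℝ) ^ (-(3 / 2) : ℝ) := by
          gcongr
          exact hC s
      _ = C * (modulus s : ℝ) ^ (-(1 / 8) : ℝ) * (modulus s : ℝ) ^ (-(9 / 8) : ℝ) := by
          rw [mul_assoc, mul_assoc, ← Real.rpow_add hq, ← Real.rpow_add hq]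
          norm_num
      _ ≤ C * z ^ (-(1 / 8) : ℝ) * (modulus s : ℝ) ^ (-(9 / 8) : ℝ) := by
          have := Real.rpow_le_rpow_of_nonpos hz (hS s hs) (by norm_num : (-(1 / 8) : ℝ) ≤ 0)
          gcongr
  calc _ ≤ C * z ^ (-(1 / 8) : ℝ) * ∑ s ∈ S, (modulus s : ℝ) ^ (-(9 / 8) : ℝ) := by
        rw [mul_sum]
        exact sum_le_sum term_le
    _ ≤ C * z ^ (-(1 / 8) : ℝ) * (T + 1) := by
        gcongr
        linarith [sum_modulus_rpow_neg_le S (by norm_num : (1 : ℝ) < 9 / 8)]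
    _ = _ := by ring

lemma modulus_mem_Ico_two_pow_log (s : Finset Nat.Primes) :
    modulus s ∈ Ico (2 ^ Nat.log 2 (modulus s)) (2 * 2 ^ Nat.log 2 (modulus s)) := by
  rw [mem_Ico, ← pow_succ']
  exact ⟨Nat.pow_log_le_self 2 (modulus_pos s).ne', Nat.lt_pow_succ_log_self one_lt_two _⟩

lemma mul_rpow_two_mul_le {C : ℝ} (hC : 0 ≤ C) {q D : ℝ} (hq : 0 ≤ q) (hD : 0 ≤ D)
    (hqD : q ≤ 2 * D) : C * q ^ (1 / 8 : ℝ) ≤ C * (2 * D ^ (1 / 8 : ℝ)) := by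
  gcongr
  calc q ^ (1 / 8 : ℝ) ≤ (2 * D) ^ (1 / 8 : ℝ) := by gcongr
    _ = 2 ^ (1 / 8 : ℝ) * D ^ (1 / 8 : ℝ) := Real.mul_rpow zero_le_two hD
    _ ≤ 2 * D ^ (1 / 8 : ℝ) := by
        gcongr
        exact Real.rpow_le_self_of_one_le one_le_two (by norm_num)

lemma rpow_neg_half_mul_le {C K : ℝ} (hC : 0 ≤ C) {q D : ℝ} (hD : 0 < D) (hDq : D ≤ q)
    (hK : K ≤ C * q ^ (1 / 8 : ℝ)) :
    q ^ (-(1 / 2) : ℝ) * (4 * K) ≤ 4 * C * D ^ (-(3 / 8) : ℝ) := by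
  have hq : 0 < q := hD.trans_le hDq
  calc q ^ (-(1 / 2) : ℝ) * (4 * K) ≤ q ^ (-(1 / 2) : ℝ) * (4 * (C * q ^ (1 / 8 : ℝ))) := by gcongr
    _ = 4 * C * q ^ (-(3 / 8) : ℝ) := by
        rw [show (-(3 / 8) : ℝ) = -(1 / 2) + 1 / 8 by norm_num, Real.rpow_add hq]
        ring
    _ ≤ 4 * C * D ^ (-(3 / 8) : ℝ) :=
        mul_le_mul_of_nonneg_left (Real.rpow_le_rpow_of_nonpos hD hDq (by norm_num))
          (by positivity)

lemma sum_dyadic_sqNorm_ramanujanAvg_le (hf : f.HasFiniteSupport) {C : ℝ} (hC1 : 1 ≤ C)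
    (hC : ∀ s, 4 ^ #s ≤ C * (modulus s : ℝ) ^ (1 / 8 : ℝ)) {B : Finset (Finset Nat.Primes)} {j : ℕ}
    (hB : ∀ s ∈ B, Nat.log 2 (modulus s) = j) :
    ∑ s ∈ B, (modulus s : ℝ) ^ (-(1 / 2) : ℝ) *
        (4 * 4 ^ #s * sqNorm (ramanujanAvg s (window s) f)) ≤
      (2 ^ (-(1 / 4) : ℝ)) ^ j * (12 * C ^ 2 * sqNorm f) := by
  let D : ℕ := 2 ^ j
  have hD1 : (1 : ℝ) ≤ D := Nat.one_le_cast.mpr Nat.one_le_two_pow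
  have hD0 : (0 : ℝ) < D := by linarith
  have hBD (s) (hs : s ∈ B) : modulus s ∈ Ico D (2 * D) := by
    simpa only [D, hB s hs] using modulus_mem_Ico_two_pow_log s
  have card_bound (s) (hs : s ∈ B) : 4 ^ #s ≤ C * (2 * (D : ℝ) ^ (1 / 8 : ℝ)) :=
    (hC s).trans (mul_rpow_two_mul_le (by linarith) (Nat.cast_nonneg _) hD0.le
      (by exact_mod_cast (mem_Ico.mp (hBD s hs)).2.le))
  have term_le (s) (hs : s ∈ B) : (modulus s : ℝ) ^ (-(1 / 2) : ℝ) *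
        (4 * 4 ^ #s * sqNorm (ramanujanAvg s (window s) f)) ≤
      4 * C * (D : ℝ) ^ (-(3 / 8) : ℝ) *
        sqNorm (ramanujanAvg s (modulus s * (32 * D ^ 4)) f) := by
    rw [window, hB s hs, ← mul_assoc]
    exact mul_le_mul_of_nonneg_right (rpow_neg_half_mul_le (by linarith) hD0
      (Nat.cast_le.mpr (mem_Ico.mp (hBD s hs)).1) (hC s)) (sqNorm_nonneg _)
  have norm_nonneg := sqNorm_nonneg f
  calc _ ≤ 4 * C * (D : ℝ) ^ (-(3 / 8) : ℝ) *
          ∑ s ∈ B, sqNorm (ramanujanAvg s (modulus s * (32 * D ^ 4)) f) := by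
        rw [mul_sum]
        exact sum_le_sum term_le
    _ ≤ 4 * C * (D : ℝ) ^ (-(3 / 8) : ℝ) * ((C * (2 * (D : ℝ) ^ (1 / 8 : ℝ)) + 1) * sqNorm f) := by
        gcongr
        exact sum_sqNorm_ramanujanAvg_le hf hBD (by positivity) card_bound
    _ ≤ 4 * C * (D : ℝ) ^ (-(3 / 8) : ℝ) * (3 * C * (D : ℝ) ^ (1 / 8 : ℝ) * sqNorm f) := by
        have := one_le_mul_of_one_le_of_one_le hC1
          (Real.one_le_rpow hD1 (by norm_num : (0 : ℝ) ≤ 1 / 8))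
        gcongr
        linarith
    _ = (D : ℝ) ^ (-(1 / 4) : ℝ) * (12 * C ^ 2 * sqNorm f) := by
        rw [show (-(1 / 4) : ℝ) = -(3 / 8) + 1 / 8 by norm_num, Real.rpow_add hD0]
        ring
    _ = _ := by
        rw [Nat.cast_pow, Nat.cast_ofNat, ← Real.rpow_natCast_mul zero_le_two,
          ← Real.rpow_mul_natCast zero_le_two, mul_comm (j : ℝ)]

lemma exists_sum_sqNorm_ramanujanAvg_window_le : ∃ C : ℝ, 0 < C ∧
    ∀ (S : Finset (Finset Nat.Primes)) (f : ℤ → ℝ), f.HasFiniteSupport →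
      ∑ s ∈ S, (modulus s : ℝ) ^ (-(1 / 2) : ℝ) *
        (4 * 4 ^ #s * sqNorm (ramanujanAvg s (window s) f)) ≤ C * sqNorm f := by
  obtain ⟨C, hC1, hC⟩ := exists_pow_card_le_mul_modulus_rpow (K := 4) (δ := 1 / 8) (by norm_num)
    (by norm_num)
  let ρ : ℝ := 2 ^ (-(1 / 4) : ℝ)
  have hρ0 : 0 ≤ ρ := by positivity
  have hρ1 : ρ < 1 := Real.rpow_lt_one_of_one_lt_of_neg one_lt_two (by norm_num)
  have : 0 < (1 - ρ)⁻¹ := inv_pos.mpr (by linarith)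
  refine ⟨(1 - ρ)⁻¹ * (12 * C ^ 2), by positivity, fun S f hf => ?_⟩
  have norm_nonneg := sqNorm_nonneg f
  let blocks := S.image fun s => Nat.log 2 (modulus s)
  have geometric : ∑ j ∈ blocks, ρ ^ j ≤ (1 - ρ)⁻¹ := by
    rw [← tsum_geometric_of_lt_one hρ0 hρ1]
    exact (summable_geometric_of_lt_one hρ0 hρ1).sum_le_tsum _ fun _ _ => by positivity
  rw [← sum_fiberwise_of_maps_to (t := blocks) fun s hs =>
    mem_image_of_mem (fun s => Nat.log 2 (modulus s)) hs]
  calc _ ≤ ∑ j ∈ blocks, ρ ^ j * (12 * C ^ 2 * sqNorm f) :=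
        sum_le_sum fun j _ => sum_dyadic_sqNorm_ramanujanAvg_le hf hC1 hC fun s hs =>
          (mem_filter.mp hs).2
    _ ≤ (1 - ρ)⁻¹ * (12 * C ^ 2 * sqNorm f) := by
        rw [← sum_mul]
        gcongr
    _ = _ := by ring

lemma exists_sum_sq_sum_localCorrelation_le : ∃ C : ℝ, 0 < C ∧ ∀ f : ℤ → ℝ, f.HasFiniteSupport →
    ∀ (X : Finset ℤ) (N : ℤ → ℕ) (S : Finset (Finset Nat.Primes)) (z : ℝ), 0 < z →
    (∀ s ∈ S, z ≤ modulus s) →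
    ∑ x ∈ X, (∑ s ∈ S, (8 : ℝ) ^ #s / modulus s * localCorrelation s (N x) f x) ^ 2 ≤
      C * z ^ (-(1 / 8) : ℝ) * sqNorm f := by
  obtain ⟨C₁, hC₁, weight_le⟩ := exists_sum_weight_le
  obtain ⟨C₂, hC₂, norm_le⟩ := exists_sum_sqNorm_ramanujanAvg_window_le
  refine ⟨C₁ * C₂, by positivity, fun f hf X N S z hz hS => ?_⟩
  have cauchy_schwarz (x : ℤ) :
      (∑ s ∈ S, (8 : ℝ) ^ #s / modulus s * localCorrelation s (N x) f x) ^ 2 ≤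
      (C₁ * z ^ (-(1 / 8) : ℝ)) *
        ∑ s ∈ S, (modulus s : ℝ) ^ (-(1 / 2) : ℝ) * localCorrelation s (N x) f x ^ 2 := by
    refine (sum_sq_le_sum_mul_sum_of_sq_le_mul S (fun s _ => by positivity)
      (fun s _ => by positivity) fun s _ => le_of_eq ?_).trans
      (mul_le_mul_of_nonneg_right (weight_le S z hz hS) (sum_nonneg fun s _ => by positivity))
    have hq : (0 : ℝ) < modulus s := Nat.cast_pos.mpr (modulus_pos s)
    rw [mul_pow, mul_assoc _ (_ ^ (1 / 2 : ℝ)), ← mul_assoc (_ ^ (1 / 2 : ℝ)), ← Real.rpow_add hq,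
      add_neg_cancel, Real.rpow_zero, one_mul]
  have swapped : ∑ x ∈ X, ∑ s ∈ S, (modulus s : ℝ) ^ (-(1 / 2) : ℝ) *
      localCorrelation s (N x) f x ^ 2 ≤ C₂ * sqNorm f := by
    rw [sum_comm]
    refine (sum_le_sum fun s _ => ?_).trans (norm_le S f hf)
    rw [← mul_sum]
    exact mul_le_mul_of_nonneg_left (sum_sq_localCorrelation_le hf s N X) (by positivity)
  calc _ ≤ C₁ * z ^ (-(1 / 8) : ℝ) * ∑ x ∈ X, ∑ s ∈ S, (modulus s : ℝ) ^ (-(1 / 2) : ℝ) *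
        localCorrelation s (N x) f x ^ 2 := by
        rw [mul_sum]
        exact sum_le_sum fun x _ => cauchy_schwarz x
    _ ≤ C₁ * z ^ (-(1 / 8) : ℝ) * (C₂ * sqNorm f) := by gcongr
    _ = _ := by ring

end HighModuli

section Multiplicative

variable {s t g d : Finset Nat.Primes} {n : ℤ}

/-- Euler's function of the squarefree number `modulus s`, as a real number. -/
noncomputable def totient (s : Finset Nat.Primes) : ℝ := ∏ p ∈ s, ((p : ℝ) - 1)

/-- The coefficient `μ(q) / φ(q)` at the squarefree number `q = modulus s`. -/
noncomputable def moebiusDivTotient (s : Finset Nat.Primes) : ℝ := ∏ p ∈ s, -((p : ℝ) - 1)⁻¹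

/-- The multiplicative function with value `p - 2` at the prime `p`; it occurs as the coefficient
in the square of a Ramanujan sum. -/
noncomputable def predTotient (s : Finset Nat.Primes) : ℝ := ∏ p ∈ s, ((p : ℝ) - 2)

lemma two_le_cast (p : Nat.Primes) : (2 : ℝ) ≤ (p : ℕ) := by exact_mod_cast p.2.two_le

lemma totient_pos (s : Finset Nat.Primes) : 0 < totient s :=
  prod_pos fun p _ => by linarith [two_le_cast p]

lemma totient_union (h : Disjoint s t) : totient (s ∪ t) = totient s * totient t := prod_union h

lemma moebiusDivTotient_union (h : Disjoint s t) :
    moebiusDivTotient (s ∪ t) = moebiusDivTotient s * moebiusDivTotient t :=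
  prod_union h

lemma totient_sdiff_mul (h : t ⊆ s) : totient (s \ t) * totient t = totient s := prod_sdiff h

lemma predTotient_nonneg (s : Finset Nat.Primes) : 0 ≤ predTotient s :=
  prod_nonneg fun p _ => by linarith [two_le_cast p]

lemma predTotient_le_totient (s : Finset Nat.Primes) : predTotient s ≤ totient s :=
  prod_le_prod (fun p _ => by linarith [two_le_cast p]) fun p _ => by linarith

lemma moebiusDivTotient_sq (s : Finset Nat.Primes) :
    moebiusDivTotient s ^ 2 = (totient s)⁻¹ ^ 2 := by
  simp only [moebiusDivTotient, totient, ← prod_inv_distrib, ← prod_pow, neg_sq]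

lemma abs_moebiusDivTotient (s : Finset Nat.Primes) : |moebiusDivTotient s| = (totient s)⁻¹ := by
  rw [← sq_eq_sq₀ (abs_nonneg _) (inv_nonneg.mpr (totient_pos s).le), sq_abs, moebiusDivTotient_sq]

lemma inv_totient_le (s : Finset Nat.Primes) : (totient s)⁻¹ ≤ 2 ^ #s / modulus s := by
  simp only [totient, modulus, Nat.cast_prod, ← prod_const, ← prod_div_distrib,
    ← prod_inv_distrib]
  refine prod_le_prod (fun p _ => ?_) fun p _ => ?_
  · exact inv_nonneg.mpr (by linarith [two_le_cast p])
  · have := two_le_cast p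
    rw [inv_eq_one_div, div_le_div_iff₀ (by linarith) (by linarith)]
    linarith

lemma moebiusDivTotient_mul_ramanujan_of_coprime (h : ∀ p ∈ s, ¬((p : ℕ) : ℤ) ∣ n) :
    moebiusDivTotient s * ramanujan s n = (totient s)⁻¹ := by
  rw [moebiusDivTotient, ramanujan, totient, ← prod_mul_distrib, ← prod_inv_distrib]
  refine prod_congr rfl fun p hp => ?_
  rw [primeRamanujan, if_neg (h p hp)]
  ring

-- For a single prime this is `c_p(n)² = (p - 2) c_p(n) + (p - 1)`.
lemma ramanujan_sq (s : Finset Nat.Primes) (n : ℤ) :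
    ramanujan s n ^ 2 = ∑ g ∈ s.powerset, predTotient g * totient (s \ g) * ramanujan g n := by
  have sq_eq (p : ℕ) : primeRamanujan p n ^ 2 = (p - 2) * primeRamanujan p n + (p - 1) := by
    unfold primeRamanujan
    split_ifs <;> ring
  simp only [ramanujan, ← prod_pow, sq_eq, prod_add, prod_mul_distrib, predTotient, totient]
  exact sum_congr rfl fun g _ => by ring

end Multiplicative

section SelbergSquare

open scoped symmDiff

variable {Q : Finset (Finset Nat.Primes)} {s t g d : Finset Nat.Primes} {n : ℤ}

/-- Selberg's sum `∑ μ(q) c_q(n) / φ(q)` over the squarefree moduli `q` in `Q`. -/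
noncomputable def selbergSum (Q : Finset (Finset Nat.Primes)) (n : ℤ) : ℝ :=
  ∑ q ∈ Q, moebiusDivTotient q * ramanujan q n

/-- Selberg's normalising constant `∑ 1 / φ(q)` over the squarefree moduli `q` in `Q`. -/
noncomputable def selbergMass (Q : Finset (Finset Nat.Primes)) : ℝ := ∑ q ∈ Q, (totient q)⁻¹

/-- The index of a term in the expansion of the square of `selbergSum Q` into Ramanujan sums:
`⟨(s, t), g⟩` is the term of index `g ⊆ s ∩ t` in the expansion of `c_{s ∩ t}²`, which arises from
the product of the summands `s` and `t`. -/
abbrev SquareTerm := Σ _ : Finset Nat.Primes × Finset Nat.Primes, Finset Nat.Primes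

/-- The terms in the expansion of the square of `selbergSum Q`. -/
def squareTerms (Q : Finset (Finset Nat.Primes)) : Finset SquareTerm :=
  (Q ×ˢ Q).sigma fun q => (q.1 ∩ q.2).powerset

namespace SquareTerm

/-- The set of primes dividing the modulus of the Ramanujan sum in a term. -/
def support (T : SquareTerm) : Finset Nat.Primes := T.1.1 ∆ T.1.2 ∪ T.2

/-- The coefficient of the Ramanujan sum in a term. -/
noncomputable def coeff (T : SquareTerm) : ℝ :=
  moebiusDivTotient (T.1.1 ∆ T.1.2) * (totient (T.1.1 ∩ T.1.2))⁻¹ ^ 2 *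
    (predTotient T.2 * totient ((T.1.1 ∩ T.1.2) \ T.2))

end SquareTerm

/-- The coefficient of the Ramanujan sum with modulus `d` in the normalised square of
`selbergSum Q`. -/
noncomputable def selbergCoeff (Q : Finset (Finset Nat.Primes)) (d : Finset Nat.Primes) : ℝ :=
  (selbergMass Q)⁻¹ * ∑ T ∈ squareTerms Q with T.support = d, T.coeff

lemma mem_squareTerms {T : SquareTerm} :
    T ∈ squareTerms Q ↔ (T.1.1 ∈ Q ∧ T.1.2 ∈ Q) ∧ T.2 ⊆ T.1.1 ∩ T.1.2 := by
  rw [squareTerms, mem_sigma, mem_product, mem_powerset]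

lemma selbergMass_pos (hQ : Q.Nonempty) : 0 < selbergMass Q :=
  sum_pos (fun q _ => inv_pos.mpr (totient_pos q)) hQ

lemma selbergSum_of_coprime (h : ∀ q ∈ Q, ∀ p ∈ q, ¬((p : ℕ) : ℤ) ∣ n) :
    selbergSum Q n = selbergMass Q :=
  sum_congr rfl fun q hq => moebiusDivTotient_mul_ramanujan_of_coprime (h q hq)

lemma disjoint_symmDiff_of_subset_inter (hg : g ⊆ s ∩ t) : Disjoint (s ∆ t) g :=
  (disjoint_symmDiff_inf s t).mono_right hg

lemma mul_eq_symmDiff_mul_inter_sq {F : Finset Nat.Primes → ℝ}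
    (hF : ∀ s t, Disjoint s t → F (s ∪ t) = F s * F t) (s t : Finset Nat.Primes) :
    F s * F t = F (s ∆ t) * F (s ∩ t) ^ 2 := by
  have hs : F s = F (s \ t) * F (s ∩ t) := by
    rw [← hF _ _ (disjoint_sdiff_inter s t), sdiff_union_inter]
  have ht : F t = F (t \ s) * F (s ∩ t) := by
    rw [inter_comm, ← hF _ _ (disjoint_sdiff_inter t s), sdiff_union_inter]
  have hst : F (s ∆ t) = F (s \ t) * F (t \ s) := hF _ _ disjoint_sdiff_sdiff
  rw [hst, hs, ht]
  ring

lemma selbergSum_sq (Q : Finset (Finset Nat.Primes)) (n : ℤ) :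
    selbergSum Q n ^ 2 = ∑ T ∈ squareTerms Q, T.coeff * ramanujan T.support n := by
  rw [selbergSum, pow_two, sum_mul_sum, ← sum_product', squareTerms, sum_sigma]
  refine sum_congr rfl fun ⟨s, t⟩ _ => ?_
  have hmoebius := mul_eq_symmDiff_mul_inter_sq (F := moebiusDivTotient)
    (fun _ _ => moebiusDivTotient_union) s t
  have hramanujan := mul_eq_symmDiff_mul_inter_sq (F := (ramanujan · n))
    (fun _ _ h => ramanujan_union h n) s t
  rw [mul_mul_mul_comm, hmoebius, hramanujan, moebiusDivTotient_sq, ramanujan_sq, ← mul_assoc,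
    mul_sum]
  refine sum_congr rfl fun g hg => ?_
  rw [SquareTerm.coeff, SquareTerm.support,
    ramanujan_union (disjoint_symmDiff_of_subset_inter (mem_powerset.mp hg))]
  ring

lemma inv_selbergMass_mul_selbergSum_sq (Q : Finset (Finset Nat.Primes)) (n : ℤ) :
    (selbergMass Q)⁻¹ * selbergSum Q n ^ 2 =
      ∑ d ∈ (squareTerms Q).image SquareTerm.support, selbergCoeff Q d * ramanujan d n := by
  rw [selbergSum_sq, ← sum_fiberwise_of_maps_to (t := (squareTerms Q).image SquareTerm.support)
    (g := SquareTerm.support) (fun _ => mem_image_of_mem _), mul_sum]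
  refine sum_congr rfl fun d _ => ?_
  rw [selbergCoeff, mul_assoc, sum_mul]
  exact congrArg _ (sum_congr rfl fun T hT => by rw [(mem_filter.mp hT).2])

lemma abs_coeff_le {T : SquareTerm} (hT : T ∈ squareTerms Q) :
    |T.coeff| ≤ (totient T.support)⁻¹ * (totient ((T.1.1 ∩ T.1.2) \ T.2))⁻¹ := by
  obtain ⟨⟨s, t⟩, g⟩ := T
  have hg : g ⊆ s ∩ t := (mem_squareTerms.mp hT).2
  have hrest := totient_pos ((s ∩ t) \ g)
  have hg_pos := totient_pos g
  have hst := totient_pos (s ∆ t)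
  simp only [SquareTerm.coeff, SquareTerm.support,
    totient_union (disjoint_symmDiff_of_subset_inter hg), ← totient_sdiff_mul hg, abs_mul,
    abs_pow, abs_inv, abs_moebiusDivTotient, abs_of_pos hrest, abs_of_pos hg_pos,
    abs_of_nonneg (predTotient_nonneg g)]
  calc _ ≤ (totient (s ∆ t))⁻¹ * (totient ((s ∩ t) \ g) * totient g)⁻¹ ^ 2 *
        (totient g * totient ((s ∩ t) \ g)) := by
        gcongr
        exact predTotient_le_totient g
    _ = _ := by field_simp

lemma filter_squareTerms_support_empty (Q : Finset (Finset Nat.Primes)) :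
    {T ∈ squareTerms Q | T.support = ∅} = Q.image fun q => (⟨(q, q), ∅⟩ : SquareTerm) := by
  ext ⟨⟨s, t⟩, g⟩
  simp only [mem_filter, mem_squareTerms, SquareTerm.support, union_eq_empty,
    symmDiff_eq_empty, mem_image, Sigma.mk.injEq, Prod.mk.injEq, heq_eq_eq]
  constructor
  · rintro ⟨⟨⟨hs, -⟩, -⟩, rfl, rfl⟩
    exact ⟨s, hs, ⟨rfl, rfl⟩, rfl⟩
  · rintro ⟨q, hq, ⟨rfl, rfl⟩, rfl⟩
    exact ⟨⟨⟨hq, hq⟩, empty_subset _⟩, rfl, rfl⟩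

lemma selbergCoeff_empty (hQ : Q.Nonempty) : selbergCoeff Q ∅ = 1 := by
  rw [selbergCoeff, inv_mul_eq_one₀ (selbergMass_pos hQ).ne', filter_squareTerms_support_empty,
    sum_image fun _ _ _ _ h => by simpa using h, selbergMass]
  refine sum_congr rfl fun q _ => ?_
  have := (totient_pos q).ne'
  simp only [SquareTerm.coeff, symmDiff_self, bot_eq_empty, inter_self, sdiff_empty,
    moebiusDivTotient, predTotient, prod_empty]
  field_simp

/-- A term is recovered from its support, the two differences and the primes of `s ∩ t` outside
`g`. -/
lemma injOn_of_support_eq (Q : Finset (Finset Nat.Primes)) (d : Finset Nat.Primes) :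
    Set.InjOn (fun T : SquareTerm => ((T.1.1 \ T.1.2, T.1.2 \ T.1.1), (T.1.1 ∩ T.1.2) \ T.2))
      ({T ∈ squareTerms Q | T.support = d} : Finset SquareTerm) := by
  rintro ⟨⟨s, t⟩, g⟩ hT ⟨⟨s', t'⟩, g'⟩ hT' hTT'
  simp only [mem_coe, mem_filter, mem_squareTerms] at hT hT'
  simp only [SquareTerm.support] at hT hT'
  obtain ⟨⟨-, hg⟩, hd⟩ := hT
  obtain ⟨⟨-, hg'⟩, hd'⟩ := hT'
  simp only [Prod.mk.injEq] at hTT'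
  obtain ⟨⟨hst, hts⟩, hrest⟩ := hTT'
  have hsymm : s ∆ t = s' ∆ t' := congrArg₂ (· ∪ ·) hst hts
  obtain rfl : g = g' := by
    rw [← union_sdiff_cancel_left (disjoint_symmDiff_of_subset_inter hg), hd, ← hd', hsymm,
      union_sdiff_cancel_left (disjoint_symmDiff_of_subset_inter hg')]
  have hinter : s ∩ t = s' ∩ t' := by
    rw [← sdiff_union_of_subset hg, hrest, sdiff_union_of_subset hg']
  obtain rfl : s = s' := by rw [← sdiff_union_inter s t, hst, hinter, sdiff_union_inter]
  obtain rfl : t = t' := by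
    rw [← sdiff_union_inter t s, hts, inter_comm, hinter, inter_comm, sdiff_union_inter]
  rfl

lemma sum_inv_totient_le_of_support_eq (hQ : IsLowerSet (Q : Set (Finset Nat.Primes)))
    (d : Finset Nat.Primes) :
    ∑ T ∈ squareTerms Q with T.support = d, (totient ((T.1.1 ∩ T.1.2) \ T.2))⁻¹ ≤
      4 ^ #d * selbergMass Q := by
  calc ∑ T ∈ squareTerms Q with T.support = d, (totient ((T.1.1 ∩ T.1.2) \ T.2))⁻¹
      ≤ ∑ y ∈ (d.powerset ×ˢ d.powerset) ×ˢ Q, (totient y.2)⁻¹ := by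
        rw [← sum_image (f := fun y : (Finset Nat.Primes × Finset Nat.Primes) × Finset Nat.Primes =>
          (totient y.2)⁻¹) (injOn_of_support_eq Q d)]
        refine sum_le_sum_of_subset_of_nonneg (image_subset_iff.mpr ?_)
          fun y _ _ => (inv_pos.mpr (totient_pos _)).le
        rintro ⟨⟨s, t⟩, g⟩ hT
        obtain ⟨hmem, rfl⟩ := mem_filter.mp hT
        simp only [mem_product, mem_powerset, SquareTerm.support]
        exact ⟨⟨subset_union_left.trans subset_union_left,
          subset_union_right.trans subset_union_left⟩,
          hQ (sdiff_subset.trans inter_subset_left) (mem_squareTerms.mp hmem).1.1⟩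
    _ = 4 ^ #d * selbergMass Q := by
        simp only [sum_product, sum_const, card_product, card_powerset, nsmul_eq_mul, selbergMass]
        push_cast
        rw [← mul_pow]
        norm_num

lemma abs_selbergCoeff_le (hQ : IsLowerSet (Q : Set (Finset Nat.Primes))) (hQ' : Q.Nonempty)
    (d : Finset Nat.Primes) : |selbergCoeff Q d| ≤ 4 ^ #d * (totient d)⁻¹ := by
  have hmass := selbergMass_pos hQ'
  rw [selbergCoeff, abs_mul, abs_of_pos (inv_pos.mpr hmass), inv_mul_le_iff₀ hmass]
  calc |∑ T ∈ squareTerms Q with T.support = d, T.coeff|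
      ≤ ∑ T ∈ squareTerms Q with T.support = d,
          (totient d)⁻¹ * (totient ((T.1.1 ∩ T.1.2) \ T.2))⁻¹ := by
        refine (abs_sum_le_sum_abs _ _).trans (sum_le_sum fun T hT => ?_)
        rw [← (mem_filter.mp hT).2]
        exact abs_coeff_le (mem_filter.mp hT).1
    _ ≤ (totient d)⁻¹ * (4 ^ #d * selbergMass Q) := by
        rw [← mul_sum]
        exact mul_le_mul_of_nonneg_left (sum_inv_totient_le_of_support_eq hQ d)
          (inv_pos.mpr (totient_pos d)).le
    _ = selbergMass Q * (4 ^ #d * (totient d)⁻¹) := by ring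

end SelbergSquare

section Sieve

variable {Z R N M : ℕ} {a a' d d' A B s : Finset Nat.Primes} {n : ℤ} {f : ℤ → ℝ}

/-- The primes in `(a, b]`. -/
def primesIoc (a b : ℕ) : Finset Nat.Primes := (Ioc a b).subtype Nat.Prime

@[simp] lemma mem_primesIoc {a b : ℕ} {p : Nat.Primes} :
    p ∈ primesIoc a b ↔ a < p ∧ (p : ℕ) ≤ b :=
  mem_subtype.trans mem_Ioc

lemma disjoint_primesIoc (a b c : ℕ) : Disjoint (primesIoc a b) (primesIoc b c) :=
  disjoint_left.mpr fun _ h h' => (mem_primesIoc.mp h').1.not_ge (mem_primesIoc.mp h).2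

lemma sum_powerset_pow_card_div_modulus (c : ℝ) (A : Finset Nat.Primes) :
    ∑ a ∈ A.powerset, c ^ #a / modulus a = ∏ p ∈ A, (1 + c / (p : ℕ)) := by
  simp only [prod_one_add, prod_div_distrib, prod_const, modulus, Nat.cast_prod]

lemma selbergSum_powerset (A : Finset Nat.Primes) (n : ℤ) :
    selbergSum A.powerset n = ∏ p ∈ A, (1 + -((p : ℝ) - 1)⁻¹ * primeRamanujan p n) := by
  simp only [selbergSum, prod_one_add, prod_mul_distrib, moebiusDivTotient, ramanujan]

lemma selbergMass_powerset (A : Finset Nat.Primes) :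
    selbergMass A.powerset = ∏ p ∈ A, (1 + ((p : ℝ) - 1)⁻¹) := by
  simp only [selbergMass, prod_one_add, totient, prod_inv_distrib]

lemma selbergSum_powerset_factor_mem_Icc (p : Nat.Primes) (n : ℤ) :
    1 + -((p : ℝ) - 1)⁻¹ * primeRamanujan p n ∈ Set.Icc 0 (1 + ((p : ℝ) - 1)⁻¹) := by
  have hp : (0 : ℝ) < p - 1 := by linarith [two_le_cast p]
  have := inv_pos.mpr hp
  unfold primeRamanujan
  split_ifs
  · rw [neg_mul, inv_mul_cancel₀ hp.ne']
    exact ⟨by linarith, by linarith⟩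
  · exact ⟨by linarith, by linarith⟩

lemma selbergSum_powerset_nonneg (A : Finset Nat.Primes) (n : ℤ) :
    0 ≤ selbergSum A.powerset n := by
  rw [selbergSum_powerset]
  exact prod_nonneg fun p _ => (selbergSum_powerset_factor_mem_Icc p n).1

lemma selbergSum_powerset_le (A : Finset Nat.Primes) (n : ℤ) :
    selbergSum A.powerset n ≤ selbergMass A.powerset := by
  rw [selbergSum_powerset, selbergMass_powerset]
  exact prod_le_prod (fun p _ => (selbergSum_powerset_factor_mem_Icc p n).1)
    fun p _ => (selbergSum_powerset_factor_mem_Icc p n).2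

/-- The squarefree moduli up to `R`, with all prime factors larger than `Z`, of the Selberg
sieve. -/
def sieveModuli (Z R : ℕ) : Finset (Finset Nat.Primes) :=
  {q ∈ (primesIoc Z R).powerset | modulus q ≤ R}

/-- Selberg's majorant for the primes larger than `R`. The primes up to `Z` are sieved out exactly,
by inclusion-exclusion, and those in `(Z, R]` by Selberg's square. It is not normalised: its value
at a prime `p > R` is computed in `sieveMajorant_prime`. -/
noncomputable def sieveMajorant (Z R : ℕ) (n : ℤ) : ℝ :=
  selbergSum (primesIoc 0 Z).powerset n *
    ((selbergMass (sieveModuli Z R))⁻¹ * selbergSum (sieveModuli Z R) n ^ 2)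

/-- The moduli other than `1` in the Ramanujan expansion of the square in `sieveMajorant`. -/
def majorantModuli (Z R : ℕ) : Finset (Finset Nat.Primes) :=
  ((squareTerms (sieveModuli Z R)).image SquareTerm.support).erase ∅

/-- The squarefree moduli in `[Z, M]`. -/
def moduliIcc (Z M : ℕ) : Finset (Finset Nat.Primes) :=
  {s ∈ (primesIoc 0 M).powerset | Z ≤ modulus s ∧ modulus s ≤ M}

lemma mem_sieveModuli : s ∈ sieveModuli Z R ↔ s ⊆ primesIoc Z R ∧ modulus s ≤ R := by
  rw [sieveModuli, mem_filter, mem_powerset]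

lemma le_modulus {p : Nat.Primes} (hp : p ∈ s) : (p : ℕ) ≤ modulus s :=
  Nat.le_of_dvd (modulus_pos s) (dvd_modulus hp)

lemma mem_moduliIcc : s ∈ moduliIcc Z M ↔ Z ≤ modulus s ∧ modulus s ≤ M := by
  rw [moduliIcc, mem_filter, mem_powerset, and_iff_right_iff_imp]
  exact fun h p hp => mem_primesIoc.mpr ⟨p.2.pos, (le_modulus hp).trans h.2⟩

lemma moduliIcc_subset_moduliIcc {M' : ℕ} (h : M ≤ M') : moduliIcc Z M ⊆ moduliIcc Z M' :=
  fun _ hs => mem_moduliIcc.mpr ⟨(mem_moduliIcc.mp hs).1, (mem_moduliIcc.mp hs).2.trans h⟩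

lemma card_moduliIcc_le (Z M : ℕ) : #(moduliIcc Z M) ≤ M := by
  rw [← card_map ⟨modulus, modulus_injective⟩]
  refine (card_le_card (t := Icc 1 M) fun m hm => ?_).trans_eq (by simp)
  obtain ⟨s, hs, rfl⟩ := mem_map.mp hm
  exact mem_Icc.mpr ⟨modulus_pos s, (mem_moduliIcc.mp hs).2⟩

lemma empty_mem_sieveModuli (hR : 1 ≤ R) : ∅ ∈ sieveModuli Z R :=
  mem_sieveModuli.mpr ⟨empty_subset _, by rwa [modulus_empty]⟩

lemma isLowerSet_sieveModuli : IsLowerSet (sieveModuli Z R : Set (Finset Nat.Primes)) :=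
  fun _ _ hts hs => mem_sieveModuli.mpr ⟨Subset.trans hts (mem_sieveModuli.mp hs).1,
    (modulus_le_modulus hts).trans (mem_sieveModuli.mp hs).2⟩

lemma sieveMajorant_nonneg (hR : 1 ≤ R) (n : ℤ) : 0 ≤ sieveMajorant Z R n := by
  have := selbergMass_pos ⟨_, empty_mem_sieveModuli (Z := Z) hR⟩
  have := selbergSum_powerset_nonneg (primesIoc 0 Z) n
  unfold sieveMajorant
  positivity

lemma sieveMajorant_prime {p : ℕ} (hR : 1 ≤ R) (hZR : Z ≤ R) (hp : p.Prime) (hpR : R < p) :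
    sieveMajorant Z R p = selbergMass (primesIoc 0 Z).powerset * selbergMass (sieveModuli Z R) := by
  have hmass := selbergMass_pos ⟨_, empty_mem_sieveModuli (Z := Z) hR⟩
  have not_dvd (q : Nat.Primes) (hq : (q : ℕ) ≤ R) : ¬((q : ℕ) : ℤ) ∣ (p : ℤ) := by
    rw [Int.natCast_dvd_natCast, Nat.prime_dvd_prime_iff_eq q.2 hp]
    lia
  rw [sieveMajorant, selbergSum_of_coprime fun q hq r hr => ?_,
    selbergSum_of_coprime fun q hq r hr => ?_]
  · field_simp
  · exact not_dvd r (mem_primesIoc.mp ((mem_sieveModuli.mp hq).1 hr)).2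
  · exact not_dvd r ((mem_primesIoc.mp (mem_powerset.mp hq hr)).2.trans hZR)

lemma support_subset_union {Q : Finset (Finset Nat.Primes)} {T : SquareTerm}
    (hT : T ∈ squareTerms Q) : T.support ⊆ T.1.1 ∪ T.1.2 :=
  union_subset symmDiff_subset_union
    ((mem_squareTerms.mp hT).2.trans (inter_subset_left.trans subset_union_left))

lemma modulus_union_le (s t : Finset Nat.Primes) :
    modulus (s ∪ t) ≤ modulus s * modulus t := by
  rw [← union_sdiff_self_eq_union, modulus_union disjoint_sdiff]
  exact Nat.mul_le_mul_left _ (modulus_le_modulus sdiff_subset)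

lemma subset_of_mem_majorantModuli (hd : d ∈ majorantModuli Z R) : d ⊆ primesIoc Z R := by
  obtain ⟨T, hT, rfl⟩ := mem_image.mp (mem_of_mem_erase hd)
  obtain ⟨⟨hs, ht⟩, -⟩ := mem_squareTerms.mp hT
  exact (support_subset_union hT).trans
    (union_subset (mem_sieveModuli.mp hs).1 (mem_sieveModuli.mp ht).1)

lemma modulus_le_of_mem_majorantModuli (hd : d ∈ majorantModuli Z R) : modulus d ≤ R ^ 2 := by
  obtain ⟨T, hT, rfl⟩ := mem_image.mp (mem_of_mem_erase hd)
  obtain ⟨⟨hs, ht⟩, -⟩ := mem_squareTerms.mp hT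
  calc modulus T.support ≤ modulus (T.1.1 ∪ T.1.2) := modulus_le_modulus (support_subset_union hT)
    _ ≤ modulus T.1.1 * modulus T.1.2 := modulus_union_le _ _
    _ ≤ R * R := Nat.mul_le_mul (mem_sieveModuli.mp hs).2 (mem_sieveModuli.mp ht).2
    _ = R ^ 2 := (pow_two R).symm

lemma lt_modulus_of_mem_majorantModuli (hd : d ∈ majorantModuli Z R) : Z < modulus d := by
  obtain ⟨p, hp⟩ := nonempty_of_ne_empty (ne_of_mem_erase hd)
  exact (mem_primesIoc.mp (subset_of_mem_majorantModuli hd hp)).1.trans_le (le_modulus hp)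

lemma disjoint_of_mem_majorantModuli (ha : a ⊆ primesIoc 0 Z) (hd : d ∈ majorantModuli Z R) :
    Disjoint a d :=
  (disjoint_primesIoc 0 Z R).mono ha (subset_of_mem_majorantModuli hd)

/-- The coefficient, in the Ramanujan expansion of `sieveMajorant Z R`, of the modulus which is the
product of a part `a` with prime factors up to `Z` and a part `d` with larger prime factors. -/
noncomputable def majorantCoeff (Z R : ℕ) (a d : Finset Nat.Primes) : ℝ :=
  moebiusDivTotient a * selbergCoeff (sieveModuli Z R) d

lemma sieveMajorant_eq (hR : 1 ≤ R) (n : ℤ) :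
    sieveMajorant Z R n = selbergSum (primesIoc 0 Z).powerset n +
      ∑ a ∈ (primesIoc 0 Z).powerset, ∑ d ∈ majorantModuli Z R,
        majorantCoeff Z R a d * ramanujan (a ∪ d) n := by
  have empty_mem : ∅ ∈ (squareTerms (sieveModuli Z R)).image SquareTerm.support :=
    mem_image.mpr ⟨⟨(∅, ∅), ∅⟩, mem_squareTerms.mpr
      ⟨⟨empty_mem_sieveModuli hR, empty_mem_sieveModuli hR⟩, empty_subset _⟩, rfl⟩
  rw [sieveMajorant, inv_selbergMass_mul_selbergSum_sq, ← add_sum_erase _ _ empty_mem,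
    selbergCoeff_empty ⟨_, empty_mem_sieveModuli hR⟩, mul_add]
  congr 1
  · rw [ramanujan, prod_empty, mul_one, mul_one]
  · rw [selbergSum, sum_mul_sum]
    refine sum_congr rfl fun a ha => sum_congr rfl fun d hd => ?_
    rw [ramanujan_union (disjoint_of_mem_majorantModuli (mem_powerset.mp ha) hd), majorantCoeff]
    ring

lemma abs_majorantCoeff_le (hR : 1 ≤ R) (a d : Finset Nat.Primes) :
    |majorantCoeff Z R a d| ≤ 2 ^ #a / modulus a * (8 ^ #d / modulus d) := by
  rw [majorantCoeff, abs_mul, abs_moebiusDivTotient]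
  refine mul_le_mul (inv_totient_le a) ?_ (abs_nonneg _) (by positivity)
  calc |selbergCoeff (sieveModuli Z R) d| ≤ 4 ^ #d * (totient d)⁻¹ :=
        abs_selbergCoeff_le isLowerSet_sieveModuli ⟨_, empty_mem_sieveModuli hR⟩ d
    _ ≤ 4 ^ #d * (2 ^ #d / modulus d) := by gcongr; exact inv_totient_le d
    _ = 8 ^ #d / modulus d := by rw [← mul_div_assoc, ← mul_pow]; norm_num

lemma abs_majorantCoeff_le_of_disjoint (hR : 1 ≤ R) (h : Disjoint a d) :
    |majorantCoeff Z R a d| ≤ 8 ^ #(a ∪ d) / modulus (a ∪ d) := by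
  rw [modulus_union h, card_union_of_disjoint h, pow_add, Nat.cast_mul, ← div_mul_div_comm]
  refine (abs_majorantCoeff_le hR a d).trans ?_
  gcongr
  norm_num

lemma abs_ramanujanCorrelation_div_le_two_pow (hf : ∀ x, |f x| ≤ 1) (s : Finset Nat.Primes)
    (N : ℕ) (x : ℤ) : |ramanujanCorrelation s N f x| / N ≤ 2 ^ #s := by
  refine div_le_of_le_mul₀ (Nat.cast_nonneg _) (by positivity) ?_
  calc |ramanujanCorrelation s N f x|
      ≤ ∑ t ∈ s.powerset, (modulus t : ℝ) *
          ∑ y ∈ progression (modulus t) (N / modulus t) x, |f y| :=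
        abs_ramanujanCorrelation_le s N f x
    _ ≤ ∑ _t ∈ s.powerset, (N : ℝ) := by
        refine sum_le_sum fun t _ => ?_
        have length : ∑ y ∈ progression (modulus t) (N / modulus t) x, |f y| ≤
            (N / modulus t : ℕ) := by
          simpa [card_progression (modulus_pos t)] using sum_le_card_nsmul
            (progression (modulus t) (N / modulus t) x) (fun y => |f y|) 1 fun y _ => hf y
        calc _ ≤ (modulus t : ℝ) * (N / modulus t : ℕ) := by gcongr
          _ ≤ N := by exact_mod_cast Nat.mul_div_le N (modulus t)
    _ = 2 ^ #s * N := by rw [sum_const, card_powerset, nsmul_eq_mul, Nat.cast_pow, Nat.cast_two]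

lemma union_mem_moduliIcc (ha : a ⊆ primesIoc 0 Z) (haR : modulus a ≤ R ^ 2)
    (hd : d ∈ majorantModuli Z R) : a ∪ d ∈ moduliIcc Z (R ^ 4) := by
  rw [mem_moduliIcc, modulus_union (disjoint_of_mem_majorantModuli ha hd)]
  constructor
  · exact (lt_modulus_of_mem_majorantModuli hd).le.trans
      (Nat.le_mul_of_pos_left _ (modulus_pos a))
  · calc modulus a * modulus d ≤ R ^ 2 * R ^ 2 :=
          Nat.mul_le_mul haR (modulus_le_of_mem_majorantModuli hd)
      _ = R ^ 4 := by ring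

/-- The total contribution of the moduli in `[Z, M]` to the sieve bound, where the coefficient of
each modulus is replaced by a bound that does not depend on the sieve level. -/
noncomputable def highModuliSum (Z M N : ℕ) (f : ℤ → ℝ) (x : ℤ) : ℝ :=
  ∑ s ∈ moduliIcc Z M, (8 : ℝ) ^ #s / modulus s * localCorrelation s N f x

lemma highModuliSum_nonneg (Z M N : ℕ) (f : ℤ → ℝ) (x : ℤ) : 0 ≤ highModuliSum Z M N f x :=
  sum_nonneg fun s _ => mul_nonneg (by positivity) (localCorrelation_nonneg s N f x)

lemma injOn_union_of_disjoint (h : Disjoint A B) :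
    Set.InjOn (fun y : Finset Nat.Primes × Finset Nat.Primes => y.1 ∪ y.2)
      (A.powerset ×ˢ B.powerset : Finset _) := by
  have inter_left {a d : Finset Nat.Primes} (ha : a ⊆ A) (hd : d ⊆ B) : (a ∪ d) ∩ A = a := by
    rw [union_inter_distrib_right, inter_eq_left.mpr ha,
      disjoint_iff_inter_eq_empty.mp (h.symm.mono_left hd), union_empty]
  have inter_right {a d : Finset Nat.Primes} (ha : a ⊆ A) (hd : d ⊆ B) : (a ∪ d) ∩ B = d := by
    rw [union_inter_distrib_right, inter_eq_left.mpr hd,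
      disjoint_iff_inter_eq_empty.mp (h.mono_left ha), empty_union]
  rintro ⟨a, d⟩ had ⟨a', d'⟩ had' heq
  simp only [mem_coe, mem_product, mem_powerset] at had had' heq
  obtain rfl : a = a' := by rw [← inter_left had.1 had.2, heq, inter_left had'.1 had'.2]
  obtain rfl : d = d' := by rw [← inter_right had.1 had.2, heq, inter_right had'.1 had'.2]
  rfl

lemma eight_pow_card_le (s : Finset Nat.Primes) : (8 : ℝ) ^ #s ≤ (modulus s : ℝ) ^ 3 := by
  calc (8 : ℝ) ^ #s = (2 ^ #s) ^ 3 := by rw [← pow_mul, mul_comm, pow_mul]; norm_num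
    _ ≤ (modulus s : ℝ) ^ 3 := by gcongr; exact_mod_cast two_pow_card_le_modulus s

lemma sum_moduliIcc_error_le (Z M N : ℕ) :
    ∑ s ∈ moduliIcc Z M, (8 : ℝ) ^ #s / modulus s * (64 * (modulus s : ℝ) ^ 7 / N) ≤
      64 * (M : ℝ) ^ 10 / N := by
  have term_le (s) (hs : s ∈ moduliIcc Z M) :
      (8 : ℝ) ^ #s / modulus s * (64 * (modulus s : ℝ) ^ 7 / N) ≤ 64 * (M : ℝ) ^ 9 / N := by
    have modulus_pos' : (0 : ℝ) < modulus s := Nat.cast_pos.mpr (modulus_pos s)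
    have modulus_le : (modulus s : ℝ) ≤ M := Nat.cast_le.mpr (mem_moduliIcc.mp hs).2
    calc _ ≤ (modulus s : ℝ) ^ 3 / modulus s * (64 * (modulus s : ℝ) ^ 7 / N) := by
          gcongr
          exact eight_pow_card_le s
      _ = 64 * (modulus s : ℝ) ^ 9 / N := by field_simp
      _ ≤ 64 * (M : ℝ) ^ 9 / N := by gcongr
  calc _ ≤ #(moduliIcc Z M) * (64 * (M : ℝ) ^ 9 / N) := by
        simpa only [nsmul_eq_mul] using sum_le_card_nsmul _ _ _ term_le
    _ ≤ M * (64 * (M : ℝ) ^ 9 / N) := by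
        gcongr
        exact_mod_cast card_moduliIcc_le Z M
    _ = 64 * (M : ℝ) ^ 10 / N := by ring

lemma sum_small_moduli_le (hR : 1 ≤ R) (hRN : R ^ 4 ≤ N) (hRM : R ^ 4 ≤ M)
    (hf : ∀ x, |f x| ≤ 1) (x : ℤ) :
    ∑ a ∈ (primesIoc 0 Z).powerset with modulus a ≤ R ^ 2, ∑ d ∈ majorantModuli Z R,
      |majorantCoeff Z R a d| * (|ramanujanCorrelation (a ∪ d) N f x| / N) ≤
    highModuliSum Z M N f x + 64 * (R : ℝ) ^ 40 / N := by
  set P := {a ∈ (primesIoc 0 Z).powerset | modulus a ≤ R ^ 2} ×ˢ majorantModuli Z R with hP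
  have mem_P {y : Finset Nat.Primes × Finset Nat.Primes} (hy : y ∈ P) :
      (y.1 ⊆ primesIoc 0 Z ∧ modulus y.1 ≤ R ^ 2) ∧ y.2 ∈ majorantModuli Z R := by
    simpa only [hP, mem_product, mem_filter, mem_powerset] using hy
  have injOn : Set.InjOn (fun y : Finset Nat.Primes × Finset Nat.Primes => y.1 ∪ y.2) P :=
    (injOn_union_of_disjoint (disjoint_primesIoc 0 Z R)).mono fun y hy =>
      mem_coe.mpr (mem_product.mpr ⟨mem_powerset.mpr (mem_P hy).1.1,
        mem_powerset.mpr (subset_of_mem_majorantModuli (mem_P hy).2)⟩)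
  have image_subset : P.image (fun y => y.1 ∪ y.2) ⊆ moduliIcc Z (R ^ 4) :=
    image_subset_iff.mpr fun y hy =>
      union_mem_moduliIcc (mem_P hy).1.1 (mem_P hy).1.2 (mem_P hy).2
  have term_nonneg (s) : 0 ≤ (8 : ℝ) ^ #s / modulus s * localCorrelation s N f x :=
    mul_nonneg (by positivity) (localCorrelation_nonneg s N f x)
  calc _ = ∑ y ∈ P, |majorantCoeff Z R y.1 y.2| *
          (|ramanujanCorrelation (y.1 ∪ y.2) N f x| / N) := (sum_product' ..).symm
    _ ≤ ∑ y ∈ P, (8 : ℝ) ^ #(y.1 ∪ y.2) / modulus (y.1 ∪ y.2) *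
          (localCorrelation (y.1 ∪ y.2) N f x + 64 * (modulus (y.1 ∪ y.2) : ℝ) ^ 7 / N) := by
        refine sum_le_sum fun y hy => mul_le_mul ?_ ?_ (by positivity) (by positivity)
        · exact abs_majorantCoeff_le_of_disjoint hR
            (disjoint_of_mem_majorantModuli (mem_P hy).1.1 (mem_P hy).2)
        · exact abs_ramanujanCorrelation_div_le_localCorrelation hf
            ((mem_moduliIcc.mp (image_subset (mem_image_of_mem _ hy))).2.trans hRN) x
    _ ≤ ∑ s ∈ moduliIcc Z (R ^ 4), (8 : ℝ) ^ #s / modulus s *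
          (localCorrelation s N f x + 64 * (modulus s : ℝ) ^ 7 / N) := by
        rw [← sum_image (f := fun s => (8 : ℝ) ^ #s / modulus s *
          (localCorrelation s N f x + 64 * (modulus s : ℝ) ^ 7 / N)) injOn]
        refine sum_le_sum_of_subset_of_nonneg image_subset fun s _ _ => ?_
        have := localCorrelation_nonneg s N f x
        positivity
    _ ≤ _ := by
        simp only [mul_add, sum_add_distrib, highModuliSum]
        refine add_le_add (sum_le_sum_of_subset_of_nonneg (moduliIcc_subset_moduliIcc hRM)
          fun s _ _ => term_nonneg s) ((sum_moduliIcc_error_le Z (R ^ 4) N).trans_eq ?_)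
        push_cast
        ring

lemma sum_large_moduli_le (hR : 1 ≤ R) (hf : ∀ x, |f x| ≤ 1) (x : ℤ) :
    ∑ a ∈ (primesIoc 0 Z).powerset with ¬modulus a ≤ R ^ 2, ∑ d ∈ majorantModuli Z R,
      |majorantCoeff Z R a d| * (|ramanujanCorrelation (a ∪ d) N f x| / N) ≤
    (∑ a ∈ (primesIoc 0 Z).powerset with ¬modulus a ≤ R ^ 2, (4 : ℝ) ^ #a / modulus a) *
      ∏ p ∈ primesIoc Z R, (1 + 16 / ((p : ℕ) : ℝ)) := by
  rw [← sum_powerset_pow_card_div_modulus, sum_mul_sum]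
  refine sum_le_sum fun a ha => ?_
  have ha' : a ⊆ primesIoc 0 Z := mem_powerset.mp (mem_filter.mp ha).1
  refine le_trans (sum_le_sum fun d hd => ?_) (sum_le_sum_of_subset_of_nonneg
    (fun d hd => mem_powerset.mpr (subset_of_mem_majorantModuli hd)) fun d _ _ => by positivity)
  calc |majorantCoeff Z R a d| * (|ramanujanCorrelation (a ∪ d) N f x| / N)
      ≤ 2 ^ #a / modulus a * (8 ^ #d / modulus d) * 2 ^ #(a ∪ d) :=
        mul_le_mul (abs_majorantCoeff_le hR a d) (abs_ramanujanCorrelation_div_le_two_pow hf _ N x)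
          (by positivity) (by positivity)
    _ = (2 * 2) ^ #a / modulus a * ((8 * 2) ^ #d / modulus d) := by
        rw [card_union_of_disjoint (disjoint_of_mem_majorantModuli ha' hd), pow_add, mul_pow,
          mul_pow]
        ring
    _ = 4 ^ #a / modulus a * (16 ^ #d / modulus d) := by norm_num

lemma sum_selbergSum_powerset_mul_le (hf : ∀ x, 0 ≤ f x) (A : Finset Nat.Primes) (N : ℕ) (x : ℤ) :
    (∑ n ∈ Icc 1 N, selbergSum A.powerset n * f (x + n)) / N ≤
      selbergMass A.powerset * progressionAvg 1 N f x := by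
  simp only [progressionAvg, sum_progression one_pos, Nat.cast_one, one_mul]
  rw [div_eq_inv_mul, mul_left_comm, mul_sum (a := selbergMass _)]
  gcongr with n
  · exact hf _
  · exact selbergSum_powerset_le A n

lemma sum_sieveMajorant_mul_le (hR : 1 ≤ R) (hRN : R ^ 4 ≤ N) (hRM : R ^ 4 ≤ M)
    (hf0 : ∀ x, 0 ≤ f x) (hf1 : ∀ x, f x ≤ 1) (x : ℤ) :
    (∑ n ∈ Icc 1 N, sieveMajorant Z R n * f (x + n)) / N ≤
      selbergMass (primesIoc 0 Z).powerset * progressionAvg 1 N f x +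
      highModuliSum Z M N f x + 64 * (R : ℝ) ^ 40 / N +
      (∑ a ∈ (primesIoc 0 Z).powerset with ¬modulus a ≤ R ^ 2, (4 : ℝ) ^ #a / modulus a) *
        ∏ p ∈ primesIoc Z R, (1 + 16 / ((p : ℕ) : ℝ)) := by
  have hf (x) : |f x| ≤ 1 := (abs_of_nonneg (hf0 x)).trans_le (hf1 x)
  have expansion : ∑ n ∈ Icc 1 N, sieveMajorant Z R n * f (x + n) =
      ∑ n ∈ Icc 1 N, selbergSum (primesIoc 0 Z).powerset n * f (x + n) +
      ∑ a ∈ (primesIoc 0 Z).powerset, ∑ d ∈ majorantModuli Z R,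
        majorantCoeff Z R a d * ramanujanCorrelation (a ∪ d) N f x := by
    simp only [sieveMajorant_eq hR, add_mul, sum_add_distrib, ramanujanCorrelation, mul_sum,
      sum_mul, ← mul_assoc]
    rw [sum_comm]
    exact congrArg _ (sum_congr rfl fun _ _ => sum_comm)
  have triangle : (∑ a ∈ (primesIoc 0 Z).powerset, ∑ d ∈ majorantModuli Z R,
        majorantCoeff Z R a d * ramanujanCorrelation (a ∪ d) N f x) / N ≤
      ∑ a ∈ (primesIoc 0 Z).powerset, ∑ d ∈ majorantModuli Z R,
        |majorantCoeff Z R a d| * (|ramanujanCorrelation (a ∪ d) N f x| / N) := by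
    simp only [sum_div, ← mul_div_assoc, ← abs_mul]
    gcongr
    exact le_abs_self _
  rw [expansion, add_div]
  rw [← sum_filter_add_sum_filter_not _ (fun a => modulus a ≤ R ^ 2)
    fun a => ∑ d ∈ majorantModuli Z R, |_| * _] at triangle
  linarith [sum_selbergSum_powerset_mul_le hf0 (primesIoc 0 Z) N x,
    sum_small_moduli_le (Z := Z) hR hRN hRM hf x, sum_large_moduli_le (Z := Z) (N := N) hR hf x]

end Sieve

lemma primesIoc_union_primesIoc {a b c : ℕ} (hab : a ≤ b) (hbc : b ≤ c) :
    primesIoc a b ∪ primesIoc b c = primesIoc a c := by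
  ext p
  simp only [mem_union, mem_primesIoc]
  lia

lemma primesIoc_subset_primesIoc {a b c d : ℕ} (hca : c ≤ a) (hbd : b ≤ d) :
    primesIoc a b ⊆ primesIoc c d := fun p hp => by
  rw [mem_primesIoc] at hp ⊢
  lia

/-- The primes in `(n, 2n]` divide the binomial coefficient `(2n).choose n ≤ 2 ^ (2n)`. -/
lemma pow_card_primesIoc_le (n : ℕ) : n ^ #(primesIoc n (n + n)) ≤ 2 ^ (n + n) :=
  calc n ^ #(primesIoc n (n + n)) ≤ modulus (primesIoc n (n + n)) :=
        pow_card_le_prod _ _ _ fun _ hp => (mem_primesIoc.mp hp).1.le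
    _ ≤ (n + n).choose n := by
      refine Nat.le_of_dvd (Nat.choose_pos (Nat.le_add_left n n)) ?_
      refine Int.natCast_dvd_natCast.mp (intCast_modulus_dvd_iff.mpr fun p hp => ?_)
      have ⟨lower, upper⟩ := mem_primesIoc.mp hp
      exact Int.natCast_dvd_natCast.mpr (p.2.dvd_choose_add lower lower upper)
    _ ≤ 2 ^ (n + n) := Nat.choose_le_two_pow _ _

lemma mul_card_primesIoc_two_pow_le (j : ℕ) :
    j * #(primesIoc (2 ^ j) (2 ^ (j + 1))) ≤ 2 ^ (j + 1) := by
  have h := pow_card_primesIoc_le (2 ^ j)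
  rw [← two_mul, ← pow_succ', ← pow_mul] at h
  exact (Nat.pow_le_pow_iff_right one_lt_two).mp h

lemma sum_inv_primesIoc_two_pow_le {j : ℕ} (hj : j ≠ 0) :
    ∑ p ∈ primesIoc (2 ^ j) (2 ^ (j + 1)), ((p : ℕ) : ℝ)⁻¹ ≤ 2 / j := by
  have card_le : (j : ℝ) * #(primesIoc (2 ^ j) (2 ^ (j + 1))) ≤ 2 ^ (j + 1) := by
    exact_mod_cast mul_card_primesIoc_two_pow_le j
  calc ∑ p ∈ primesIoc (2 ^ j) (2 ^ (j + 1)), ((p : ℕ) : ℝ)⁻¹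
      ≤ ∑ _p ∈ primesIoc (2 ^ j) (2 ^ (j + 1)), ((2 : ℝ) ^ j)⁻¹ := by
        gcongr with p hp
        exact_mod_cast (mem_primesIoc.mp hp).1.le
    _ = #(primesIoc (2 ^ j) (2 ^ (j + 1))) / 2 ^ j := by
      rw [sum_const, nsmul_eq_mul, div_eq_mul_inv]
    _ ≤ 2 / j := by
      rw [div_le_div_iff₀ (by positivity) (by positivity)]
      linarith [pow_succ' (2 : ℝ) j]

lemma sum_inv_primesIoc_two_pow_succ_le (j : ℕ) :
    ∑ p ∈ primesIoc 0 (2 ^ (j + 1)), ((p : ℕ) : ℝ)⁻¹ ≤ 1 / 2 + 2 * harmonic j := by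
  induction j with
  | zero =>
    obtain ⟨two, two_eq⟩ : ∃ p : Nat.Primes, (p : ℕ) = 2 := ⟨⟨2, Nat.prime_two⟩, rfl⟩
    have primesIoc_two : primesIoc 0 2 = {two} := by
      ext p
      rw [mem_primesIoc, mem_singleton, ← Nat.Primes.coe_nat_inj]
      have := p.2.two_le
      lia
    simp [primesIoc_two, two_eq]
  | succ j ih =>
    have block := sum_inv_primesIoc_two_pow_le j.succ_ne_zero
    rw [← primesIoc_union_primesIoc (Nat.zero_le (2 ^ (j + 1)))
        (Nat.pow_le_pow_right two_pos (j + 1).le_succ),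
      sum_union (disjoint_primesIoc _ _ _), harmonic_succ]
    push_cast at block ⊢
    rw [div_eq_mul_inv] at block
    linarith

lemma sum_inv_primesIoc_le {J : ℕ} (hJ : J ≠ 0) :
    ∑ p ∈ primesIoc 0 (2 ^ J), ((p : ℕ) : ℝ)⁻¹ ≤ 5 / 2 + 2 * Real.log J := by
  obtain ⟨j, rfl⟩ := Nat.exists_eq_succ_of_ne_zero hJ
  have log_mono : Real.log j ≤ Real.log j.succ := by
    rcases j.eq_zero_or_pos with rfl | hj
    · simp
    · gcongr
      exact j.le_succ
  linarith [sum_inv_primesIoc_two_pow_succ_le j, harmonic_le_one_add_log j]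

lemma exp_nat_mul_add_log (k : ℕ) (a : ℝ) {y : ℝ} (hy : 0 < y) :
    Real.exp (a + k * Real.log y) = Real.exp a * y ^ k := by
  rw [Real.exp_add, Real.exp_nat_mul, Real.exp_log hy]

lemma prod_one_add_div_primesIoc_le (k : ℕ) {J : ℕ} (hJ : J ≠ 0) :
    ∏ p ∈ primesIoc 0 (2 ^ J), (1 + k / ((p : ℕ) : ℝ)) ≤
      Real.exp (5 / 2 * k) * (J : ℝ) ^ (2 * k) := by
  calc ∏ p ∈ primesIoc 0 (2 ^ J), (1 + k / ((p : ℕ) : ℝ))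
      ≤ Real.exp (k * ∑ p ∈ primesIoc 0 (2 ^ J), ((p : ℕ) : ℝ)⁻¹) := by
        rw [mul_sum]
        exact Real.prod_one_add_le_exp_sum _ fun _ => by positivity
    _ ≤ Real.exp (k * (5 / 2 + 2 * Real.log J)) := by
      gcongr
      exact sum_inv_primesIoc_le hJ
    _ = Real.exp (5 / 2 * k) * (J : ℝ) ^ (2 * k) := by
      rw [← exp_nat_mul_add_log (2 * k) _ (by positivity)]
      push_cast
      ring_nf

lemma sum_inv_sq_primesIoc_le (n : ℕ) : ∑ p ∈ primesIoc 0 n, (((p : ℕ) : ℝ) ^ 2)⁻¹ ≤ 1 :=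
  calc ∑ p ∈ primesIoc 0 n, (((p : ℕ) : ℝ) ^ 2)⁻¹
      = ∑ m ∈ Ioc 0 n with m.Prime, ((m : ℝ) ^ 2)⁻¹ :=
        sum_subtype_eq_sum_filter fun m : ℕ => ((m : ℝ) ^ 2)⁻¹
    _ ≤ ∑ m ∈ Ioo 1 (n + 1), ((m : ℝ) ^ 2)⁻¹ := by
      refine sum_le_sum_of_subset_of_nonneg (fun m hm => ?_) fun _ _ _ => by positivity
      have ⟨range, prime⟩ := mem_filter.mp hm
      exact mem_Ioo.mpr ⟨prime.one_lt, Nat.lt_succ_of_le (mem_Ioc.mp range).2⟩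
    _ ≤ 1 := (sum_Ioo_inv_sq_le 1 (n + 1)).trans (by norm_num)

lemma selbergMass_powerset_primesIoc_le {J : ℕ} (hJ : J ≠ 0) :
    selbergMass (primesIoc 0 (2 ^ J)).powerset ≤ Real.exp (9 / 2) * (J : ℝ) ^ 2 := by
  have inv_sub_one_le (p : Nat.Primes) :
      (((p : ℕ) : ℝ) - 1)⁻¹ ≤ ((p : ℕ) : ℝ)⁻¹ + 2 * (((p : ℕ) : ℝ) ^ 2)⁻¹ := by
    have hp := two_le_cast p
    rw [inv_le_iff_one_le_mul₀ (by linarith)]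
    field_simp
    nlinarith
  rw [selbergMass_powerset]
  calc ∏ p ∈ primesIoc 0 (2 ^ J), (1 + (((p : ℕ) : ℝ) - 1)⁻¹)
      ≤ Real.exp (∑ p ∈ primesIoc 0 (2 ^ J), (((p : ℕ) : ℝ) - 1)⁻¹) :=
        Real.prod_one_add_le_exp_sum _ fun p => inv_nonneg.mpr (by linarith [two_le_cast p])
    _ ≤ Real.exp (9 / 2 + (2 : ℕ) * Real.log J) := by
      gcongr
      have := sum_inv_primesIoc_le hJ
      have := sum_inv_sq_primesIoc_le (2 ^ J)
      calc ∑ p ∈ primesIoc 0 (2 ^ J), (((p : ℕ) : ℝ) - 1)⁻¹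
          ≤ ∑ p ∈ primesIoc 0 (2 ^ J), (((p : ℕ) : ℝ)⁻¹ + 2 * (((p : ℕ) : ℝ) ^ 2)⁻¹) :=
            sum_le_sum fun p _ => inv_sub_one_le p
        _ ≤ 9 / 2 + (2 : ℕ) * Real.log J := by
          rw [sum_add_distrib, ← mul_sum]
          push_cast
          linarith
    _ = Real.exp (9 / 2) * (J : ℝ) ^ 2 := exp_nat_mul_add_log _ _ (by positivity)

lemma modulus_rpow_inv_le {J : ℕ} (hJ : J ≠ 0) {a : Finset Nat.Primes}
    (ha : a ⊆ primesIoc 0 (2 ^ J)) : (modulus a : ℝ) ^ (J : ℝ)⁻¹ ≤ 2 ^ #a := by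
  have modulus_le : modulus a ≤ (2 ^ #a) ^ J := by
    rw [← pow_mul, mul_comm, pow_mul]
    exact prod_le_pow_card _ _ _ fun p hp => (mem_primesIoc.mp (ha hp)).2
  rw [Real.rpow_inv_le_iff_of_pos (by positivity) (by positivity) (by positivity),
    Real.rpow_natCast]
  exact_mod_cast modulus_le

/-- Rankin's trick: a modulus `> 2 ^ (2r)` composed of primes `≤ 2 ^ J` has at least `2r / J`
prime factors, so trading `4` for `8` gains `2 ^ (2r / J)`. -/
lemma sum_pow_card_div_modulus_large_le {J : ℕ} (hJ : J ≠ 0) (r : ℕ) :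
    ∑ a ∈ (primesIoc 0 (2 ^ J)).powerset with ¬modulus a ≤ (2 ^ r) ^ 2, (4 : ℝ) ^ #a / modulus a ≤
      (2 : ℝ) ^ (-(2 * r / J) : ℝ) * (Real.exp 20 * (J : ℝ) ^ 16) := by
  have many_factors {a : Finset Nat.Primes} (ha : a ⊆ primesIoc 0 (2 ^ J))
      (large : ¬modulus a ≤ (2 ^ r) ^ 2) : (2 : ℝ) ^ (2 * r / J : ℝ) ≤ 2 ^ #a := by
    refine le_trans ?_ (modulus_rpow_inv_le hJ ha)
    rw [div_eq_mul_inv, Real.rpow_mul zero_le_two]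
    gcongr
    rw [← pow_mul, mul_comm] at large
    exact_mod_cast (not_le.mp large).le
  calc _ ≤ ∑ a ∈ (primesIoc 0 (2 ^ J)).powerset with ¬modulus a ≤ (2 ^ r) ^ 2,
          (2 : ℝ) ^ (-(2 * r / J) : ℝ) * ((8 : ℝ) ^ #a / modulus a) := by
        refine sum_le_sum fun a ha => ?_
        have ⟨subset, large⟩ := mem_filter.mp ha
        rw [Real.rpow_neg zero_le_two, ← mul_div_assoc, show (8 : ℝ) = 2 * 4 by norm_num, mul_pow]
        gcongr
        rw [← mul_assoc]
        refine le_mul_of_one_le_left (by positivity) ?_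
        rw [inv_mul_eq_div, one_le_div (by positivity)]
        exact many_factors (mem_powerset.mp subset) large
    _ ≤ (2 : ℝ) ^ (-(2 * r / J) : ℝ) *
          ∑ a ∈ (primesIoc 0 (2 ^ J)).powerset, (8 : ℝ) ^ #a / modulus a := by
      rw [← mul_sum]
      gcongr
      exact filter_subset _ _
    _ ≤ (2 : ℝ) ^ (-(2 * r / J) : ℝ) * (Real.exp 20 * (J : ℝ) ^ 16) := by
      gcongr
      have := prod_one_add_div_primesIoc_le 8 hJ
      rw [sum_powerset_pow_card_div_modulus]
      norm_num at this ⊢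
      exact this

lemma prod_one_add_sixteen_div_primesIoc_le (Z : ℕ) {r : ℕ} (hr : r ≠ 0) :
    ∏ p ∈ primesIoc Z (2 ^ r), (1 + 16 / ((p : ℕ) : ℝ)) ≤ Real.exp 40 * (r : ℝ) ^ 32 := by
  have := prod_one_add_div_primesIoc_le 16 hr
  norm_num at this
  refine le_trans ?_ this
  exact prod_le_prod_of_subset_of_one_le (primesIoc_subset_primesIoc (Nat.zero_le Z) le_rfl)
    (fun _ _ => by positivity) fun _ _ _ => le_add_of_nonneg_right (by positivity)

lemma sum_le_sum_of_injOn {α β : Type*} {S : Finset α} {T : Finset β} {F : α → ℝ} {G : β → ℝ}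
    (g : α → β) (maps : ∀ a ∈ S, g a ∈ T) (inj : Set.InjOn g S) (hle : ∀ a ∈ S, F a ≤ G (g a))
    (hG : ∀ b ∈ T, 0 ≤ G b) : ∑ a ∈ S, F a ≤ ∑ b ∈ T, G b := by
  classical
  calc ∑ a ∈ S, F a ≤ ∑ a ∈ S, G (g a) := sum_le_sum hle
    _ = ∑ b ∈ S.image g, G b := (sum_image inj).symm
    _ ≤ ∑ b ∈ T, G b :=
      sum_le_sum_of_subset_of_nonneg (image_subset_iff.mpr maps) fun b hb _ => hG b hb

lemma exists_sq_mul_modulus_eq {m : ℕ} (hm : m ≠ 0) :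
    ∃ (b : ℕ) (s : Finset Nat.Primes), b ^ 2 * modulus s = m := by
  obtain ⟨a, b, rfl, squarefree⟩ := Nat.sq_mul_squarefree m
  refine ⟨b, a.primeFactors.subtype Nat.Prime, congrArg (b ^ 2 * ·) ?_⟩
  calc modulus (a.primeFactors.subtype Nat.Prime)
      = ∏ p ∈ a.primeFactors with p.Prime, p := prod_subtype_eq_prod_filter fun p : ℕ => p
    _ = ∏ p ∈ a.primeFactors, p := by
      rw [filter_true_of_mem fun _ => Nat.prime_of_mem_primeFactors]
    _ = a := Nat.prod_primeFactors_of_squarefree squarefree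

lemma sum_inv_Icc_le (R : ℕ) :
    ∑ m ∈ Icc 1 R, (m : ℝ)⁻¹ ≤ 2 * ∑ s ∈ moduliIcc 1 R, (modulus s : ℝ)⁻¹ := by
  have decompose (m : Icc 1 R) : ∃ x : ℕ × Finset Nat.Primes, x.1 ^ 2 * modulus x.2 = m := by
    have ⟨b, s, h⟩ := exists_sq_mul_modulus_eq (Nat.one_le_iff_ne_zero.mp (mem_Icc.mp m.2).1)
    exact ⟨(b, s), h⟩
  choose g hg using decompose
  have root_ne_zero (m : Icc 1 R) : (g m).1 ≠ 0 := fun h => by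
    have := hg m
    have := (mem_Icc.mp m.2).1
    simp only [h] at *
    lia
  have inv_sq_sum : ∑ b ∈ Ioo 0 (R + 1), ((b : ℝ) ^ 2)⁻¹ ≤ 2 :=
    (sum_Ioo_inv_sq_le 0 (R + 1)).trans (by norm_num)
  calc ∑ m ∈ Icc 1 R, (m : ℝ)⁻¹ = ∑ m : Icc 1 R, (((m : ℕ) : ℝ))⁻¹ :=
        (sum_coe_sort (Icc 1 R) fun m : ℕ => (m : ℝ)⁻¹).symm
    _ ≤ ∑ x ∈ Ioo 0 (R + 1) ×ˢ moduliIcc 1 R, ((x.1 : ℝ) ^ 2)⁻¹ * (modulus x.2 : ℝ)⁻¹ := by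
      refine sum_le_sum_of_injOn g (fun m _ => ?_) (fun m _ m' _ h => ?_) (fun m _ => ?_)
        fun _ _ => by positivity
      · have := (mem_Icc.mp m.2).2
        have root_pos := Nat.pos_of_ne_zero (root_ne_zero m)
        have modulus_pos := modulus_pos (g m).2
        have modulus_le := Nat.le_mul_of_pos_left (modulus (g m).2) (pow_pos root_pos 2)
        have := hg m
        rw [mem_product, mem_Ioo, mem_moduliIcc]
        exact ⟨⟨root_pos, by nlinarith⟩, modulus_pos, by lia⟩
      · exact Subtype.ext ((hg m).symm.trans (h ▸ hg m'))
      · rw [← hg m]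
        push_cast
        rw [mul_inv]
    _ = (∑ b ∈ Ioo 0 (R + 1), ((b : ℝ) ^ 2)⁻¹) * ∑ s ∈ moduliIcc 1 R, (modulus s : ℝ)⁻¹ :=
      by rw [sum_mul_sum, sum_product]
    _ ≤ 2 * ∑ s ∈ moduliIcc 1 R, (modulus s : ℝ)⁻¹ := by gcongr

lemma totient_le_modulus (s : Finset Nat.Primes) : totient s ≤ modulus s := by
  rw [totient, modulus, Nat.cast_prod]
  exact prod_le_prod (fun p _ => by linarith [two_le_cast p]) fun _ _ => by linarith

/-- Every squarefree number splits into a divisor with prime factors `≤ Z` and one with prime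
factors `> Z`. -/
lemma sum_inv_modulus_le_selbergMass_mul {Z R : ℕ} (hZR : Z ≤ R) :
    ∑ s ∈ moduliIcc 1 R, (modulus s : ℝ)⁻¹ ≤
      selbergMass (primesIoc 0 Z).powerset * selbergMass (sieveModuli Z R) := by
  have split {s : Finset Nat.Primes} (hs : s ∈ moduliIcc 1 R) :
      s ∩ primesIoc 0 Z ∪ s ∩ primesIoc Z R = s := by
    rw [← inter_union_distrib_left, primesIoc_union_primesIoc (Nat.zero_le Z) hZR,
      inter_eq_left]
    exact fun p hp => mem_primesIoc.mpr ⟨p.2.pos, (le_modulus hp).trans (mem_moduliIcc.mp hs).2⟩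
  rw [selbergMass, selbergMass, sum_mul_sum, ← sum_product']
  refine sum_le_sum_of_injOn (fun s => (s ∩ primesIoc 0 Z, s ∩ primesIoc Z R))
    (fun s hs => ?_) (fun s hs t ht h => ?_) (fun s hs => ?_)
    fun x _ => (mul_pos (inv_pos.mpr (totient_pos _)) (inv_pos.mpr (totient_pos _))).le
  · rw [mem_product, mem_powerset, mem_sieveModuli]
    exact ⟨inter_subset_right, inter_subset_right,
      (modulus_le_modulus inter_subset_left).trans (mem_moduliIcc.mp hs).2⟩
  · have ⟨small, large⟩ := Prod.mk.injEq .. ▸ h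
    rw [← split hs, ← split ht, small, large]
  · have disjoint : Disjoint (s ∩ primesIoc 0 Z) (s ∩ primesIoc Z R) :=
      (disjoint_primesIoc 0 Z R).mono inter_subset_right inter_subset_right
    rw [← mul_inv, ← totient_union disjoint, split hs]
    exact inv_anti₀ (totient_pos s) (totient_le_modulus s)

lemma log_le_selbergMass_mul {Z R : ℕ} (hZR : Z ≤ R) :
    Real.log R ≤
      2 * (selbergMass (primesIoc 0 Z).powerset * selbergMass (sieveModuli Z R)) := by
  rcases R.eq_zero_or_pos with rfl | hR
  · have (Q : Finset (Finset Nat.Primes)) : 0 ≤ selbergMass Q :=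
      sum_nonneg fun q _ => (inv_pos.mpr (totient_pos q)).le
    have := mul_nonneg (this (primesIoc 0 Z).powerset) (this (sieveModuli Z 0))
    simpa
  calc Real.log R ≤ Real.log (R + 1 : ℕ) := by
        gcongr
        exact R.le_succ
    _ ≤ ∑ m ∈ Icc 1 R, (m : ℝ)⁻¹ := by
      have := log_add_one_le_harmonic R
      rw [harmonic_eq_sum_Icc] at this
      push_cast at this ⊢
      exact this
    _ ≤ _ := (sum_inv_Icc_le R).trans
      (mul_le_mul_of_nonneg_left (sum_inv_modulus_le_selbergMass_mul hZR) zero_le_two)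

lemma theta_eq_chebyshev (N : ℕ) : theta N = Chebyshev.theta N := by
  rw [Chebyshev.theta_eq_sum_primesLE_log, theta]
  refine sum_congr ?_ fun _ _ => rfl
  ext p
  simp [primesUpTo, Nat.mem_primesLE]

lemma log_add_one_le_two_mul_sqrt {x : ℝ} (hx : 0 ≤ x) : Real.log (x + 1) ≤ 2 * √x :=
  calc Real.log (x + 1) ≤ Real.log ((√x + 1) ^ 2) := by
        gcongr
        nlinarith [Real.sq_sqrt hx, Real.sqrt_nonneg x]
    _ = 2 * Real.log (√x + 1) := by rw [Real.log_pow, Nat.cast_two]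
    _ ≤ 2 * √x := by
      gcongr
      linarith [Real.log_le_sub_one_of_pos (show 0 < √x + 1 by positivity)]

lemma exists_mul_le_theta : ∃ c : ℝ, 0 < c ∧ ∀ N : ℕ, 2 ≤ N → c * N ≤ theta N := by
  obtain ⟨C, hC⟩ := Chebyshev.psi_sub_theta_le_mul_sqrt
  set D := (C + 2) ^ 2 / (2 * Real.log 2)
  have log_two_pos : 0 < Real.log 2 := Real.log_pos one_lt_two
  refine ⟨Real.log 2 / 2 / (1 + D / Real.log 2), by positivity, fun N hN => ?_⟩
  have psi_ge := Chebyshev.psi_ge N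
  have log_le := log_add_one_le_two_mul_sqrt N.cast_nonneg
  have theta_ge := hC N
  have sqrt_le : (C + 2) * √N ≤ Real.log 2 / 2 * N + D := by
    have complete_square : Real.log 2 / 2 * N + D - (C + 2) * √N =
        (Real.log 2 * √N - (C + 2)) ^ 2 / (2 * Real.log 2) := by
      simp only [D]
      field_simp
      linear_combination -Real.log 2 ^ 2 * Real.sq_sqrt (N.cast_nonneg (α := ℝ))
    rw [← sub_nonneg, complete_square]
    positivity
  have log_two_le : Real.log 2 ≤ theta N := by
    have two_mem : 2 ∈ primesUpTo N :=
      mem_filter.mpr ⟨mem_range.mpr (by lia), Nat.prime_two⟩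
    exact_mod_cast single_le_sum (f := fun p : ℕ => Real.log p)
      (fun p _ => Real.log_natCast_nonneg p) two_mem
  have D_le : D ≤ D / Real.log 2 * theta N := by
    rw [div_mul_eq_mul_div, le_div_iff₀ log_two_pos]
    gcongr
  rw [← theta_eq_chebyshev] at theta_ge
  rw [div_mul_eq_mul_div, div_le_iff₀ (by positivity)]
  linarith

section Pointwise

variable {Z R N : ℕ} {f : ℤ → ℝ}

lemma mem_primesUpTo {p : ℕ} : p ∈ primesUpTo N ↔ p ≤ N ∧ p.Prime := by
  rw [primesUpTo, mem_filter, mem_range, Nat.lt_succ_iff]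

lemma theta_le_two_mul (N : ℕ) : theta N ≤ 2 * N := by
  have log_four_le : Real.log 4 ≤ 2 := by
    rw [show (4 : ℝ) = 2 ^ 2 by norm_num, Real.log_pow, Nat.cast_two]
    linarith [Real.log_two_lt_d9]
  rw [theta_eq_chebyshev]
  exact (Chebyshev.theta_le_log4_mul_x N.cast_nonneg).trans (by gcongr)

lemma sum_mul_log_le_theta (hf : ∀ x, f x ≤ 1) (N : ℕ) (x : ℤ) :
    ∑ p ∈ primesUpTo N, f (x + p) * Real.log p ≤ theta N :=
  sum_le_sum fun p _ => mul_le_of_le_one_left (Real.log_natCast_nonneg p) (hf _)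

lemma sum_primes_le_mul_log_le (hRN : R ≤ N) (hf : ∀ x, f x ≤ 1) (x : ℤ) :
    ∑ p ∈ primesUpTo N with ¬R < p, f (x + p) * Real.log p ≤ 2 * R := by
  have primes_eq : {p ∈ primesUpTo N | ¬R < p} = primesUpTo R := by
    ext p
    simp only [mem_filter, mem_primesUpTo]
    grind
  rw [primes_eq]
  exact (sum_mul_log_le_theta hf R x).trans (theta_le_two_mul R)

lemma sum_primes_gt_mul_log_le {κ : ℝ} (hκ : 0 ≤ κ) (hNR : Real.log N ≤ κ * Real.log R)
    (hR : 1 ≤ R) (hZR : Z ≤ R) (hf : ∀ x, 0 ≤ f x) (x : ℤ) :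
    ∑ p ∈ primesUpTo N with R < p, f (x + p) * Real.log p ≤
      2 * κ * ∑ n ∈ Icc 1 N, sieveMajorant Z R n * f (x + n) := by
  have term_le (p : ℕ) (hp : p ∈ {p ∈ primesUpTo N | R < p}) :
      f (x + p) * Real.log p ≤ 2 * κ * (sieveMajorant Z R p * f (x + p)) := by
    obtain ⟨hpN, hRp⟩ := mem_filter.mp hp
    obtain ⟨hpN, prime_p⟩ := mem_primesUpTo.mp hpN
    have log_le : Real.log p ≤ 2 * κ * sieveMajorant Z R p :=
      calc Real.log p ≤ Real.log N :=
            Real.log_le_log (mod_cast prime_p.pos) (Nat.cast_le.mpr hpN)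
        _ ≤ κ * Real.log R := hNR
        _ ≤ κ * (2 * sieveMajorant Z R p) := by
            rw [sieveMajorant_prime hR hZR prime_p hRp]
            gcongr
            exact log_le_selbergMass_mul hZR
        _ = _ := by ring
    calc _ ≤ f (x + p) * (2 * κ * sieveMajorant Z R p) :=
          mul_le_mul_of_nonneg_left log_le (hf _)
      _ = _ := by ring
  rw [mul_sum]
  refine (sum_le_sum term_le).trans (sum_le_sum_of_subset_of_nonneg (fun p hp => ?_) fun n _ _ =>
    mul_nonneg (by positivity) (mul_nonneg (sieveMajorant_nonneg hR n) (hf _)))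
  obtain ⟨hpN, prime_p⟩ := mem_primesUpTo.mp (mem_filter.mp hp).1
  exact mem_Icc.mpr ⟨prime_p.one_le, hpN⟩

lemma exists_pow_le_mul_two_rpow (k : ℕ) :
    ∃ C : ℝ, 0 < C ∧ ∀ y : ℝ, 0 ≤ y → y ^ k ≤ C * (2 : ℝ) ^ y := by
  have : 0 < Real.log 2 := Real.log_pos one_lt_two
  refine ⟨k.factorial / Real.log 2 ^ k, by positivity, fun y hy => ?_⟩
  have exp_ge := Real.pow_div_factorial_le_exp (y * Real.log 2) (by positivity) k
  rw [div_le_iff₀ (by positivity), mul_pow] at exp_ge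
  rw [Real.rpow_def_of_pos two_pos, div_mul_eq_mul_div, le_div_iff₀ (by positivity),
    mul_comm (Real.log 2) y]
  linarith

lemma exists_large_moduli_error_le : ∃ C : ℝ, 0 < C ∧ ∀ J K r : ℕ, J ≠ 0 → K ≠ 0 →
    K * J ^ 2 ≤ r →
    ((2 : ℝ) ^ (-(2 * r / J) : ℝ) * (Real.exp 20 * (J : ℝ) ^ 16)) *
      (Real.exp 40 * (r : ℝ) ^ 32) ≤ C * (1 / 2 : ℝ) ^ (K * J) := by
  obtain ⟨C, hC, pow_le⟩ := exists_pow_le_mul_two_rpow 96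
  refine ⟨Real.exp 20 * Real.exp 40 * C, by positivity, fun J K r hJ hK h => ?_⟩
  have one_le_J : (1 : ℝ) ≤ J := mod_cast Nat.one_le_iff_ne_zero.mpr hJ
  have one_le_K : (1 : ℝ) ≤ K := mod_cast Nat.one_le_iff_ne_zero.mpr hK
  have h' : (K : ℝ) * J ^ 2 ≤ r := mod_cast h
  have J_sq_le : (J : ℝ) ^ 2 ≤ r := by nlinarith
  have J_le : (J : ℝ) ≤ r := by nlinarith
  have sqrt_le : √r ≤ r / J := by
    rw [le_div_iff₀ (by positivity)]
    calc √r * J ≤ √r * √r := by gcongr; exact Real.le_sqrt_of_sq_le J_sq_le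
      _ = r := Real.mul_self_sqrt r.cast_nonneg
  have KJ_le : (K : ℝ) * J ≤ r / J := by
    rwa [le_div_iff₀ (by positivity), mul_assoc, ← sq]
  have two_rpow_le :
      (2 : ℝ) ^ (-(2 * r / J) : ℝ) ≤ (2 : ℝ) ^ (-√r) * (1 / 2 : ℝ) ^ (K * J) := by
    have half_pow : (1 / 2 : ℝ) ^ (K * J) = (2 : ℝ) ^ (-((K : ℝ) * J)) := by
      rw [Real.rpow_neg two_pos.le, ← Nat.cast_mul, Real.rpow_natCast, one_div, inv_pow]
    rw [half_pow, ← Real.rpow_add two_pos, mul_div_assoc]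
    gcongr
    · exact one_le_two
    · linarith
  have two_rpow_mul_le : (2 : ℝ) ^ (-√r) * (r : ℝ) ^ 48 ≤ C := by
    have := pow_le √r (Real.sqrt_nonneg _)
    rw [show 96 = 2 * 48 by norm_num, pow_mul, Real.sq_sqrt r.cast_nonneg] at this
    rwa [Real.rpow_neg two_pos.le, inv_mul_le_iff₀ (by positivity), mul_comm]
  calc _ ≤ (((2 : ℝ) ^ (-√r) * (1 / 2 : ℝ) ^ (K * J)) * (Real.exp 20 * (r : ℝ) ^ 16)) *
        (Real.exp 40 * (r : ℝ) ^ 32) := by gcongr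
    _ = Real.exp 20 * Real.exp 40 * ((2 : ℝ) ^ (-√r) * (r : ℝ) ^ 48) * (1 / 2 : ℝ) ^ (K * J) := by
        ring
    _ ≤ _ := by gcongr

lemma two_pow_pow_div_two_pow_le {r k m n : ℕ} (h : r * k + m ≤ n) :
    ((2 : ℝ) ^ r) ^ k / 2 ^ n ≤ (1 / 2) ^ m := by
  rw [one_div_pow, div_le_div_iff₀ (by positivity) (by positivity), ← pow_mul, ← pow_add, one_mul]
  exact pow_le_pow_right₀ one_le_two h

lemma exists_sum_sieveMajorant_mul_le : ∃ C : ℝ, 0 < C ∧ ∀ J K r n M : ℕ, J ≠ 0 → K ≠ 0 →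
    K * J ^ 2 ≤ r → 41 * r ≤ n → 2 ^ n ≤ M →
    ∀ f : ℤ → ℝ, (∀ x, 0 ≤ f x) → (∀ x, f x ≤ 1) → ∀ x : ℤ,
    (∑ i ∈ Icc 1 (2 ^ n : ℕ), sieveMajorant (2 ^ J) (2 ^ r) i * f (x + i)) / (2 : ℝ) ^ n ≤
      C * ((J : ℝ) ^ 2 * progressionAvg 1 (2 ^ n) f x + highModuliSum (2 ^ J) M (2 ^ n) f x +
        (1 / 2 : ℝ) ^ (K * J)) := by
  obtain ⟨C, hC, large_moduli_le⟩ := exists_large_moduli_error_le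
  refine ⟨Real.exp (9 / 2) + 64 + C, by positivity,
    fun J K r n M hJ hK hr hn hM f hf0 hf1 x => ?_⟩
  have J_pos : 0 < J := Nat.pos_of_ne_zero hJ
  have KJ_le : K * J ≤ r := (Nat.mul_le_mul_left K (Nat.le_self_pow two_ne_zero J)).trans hr
  have r_ne_zero : r ≠ 0 := ((Nat.mul_pos (Nat.pos_of_ne_zero hK) J_pos).trans_le KJ_le).ne'
  have R_pow_le : (2 ^ r) ^ 4 ≤ 2 ^ n := by
    rw [← pow_mul]
    exact Nat.pow_le_pow_right two_pos (by lia)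
  have sieve_le := sum_sieveMajorant_mul_le (Z := 2 ^ J) (R := 2 ^ r) Nat.one_le_two_pow R_pow_le
    (R_pow_le.trans hM) hf0 hf1 x
  push_cast at sieve_le
  have avg_nonneg := progressionAvg_nonneg hf0 1 (2 ^ n) x
  have high_nonneg := highModuliSum_nonneg (2 ^ J) M (2 ^ n) f x
  have mass_le : selbergMass (primesIoc 0 (2 ^ J)).powerset * progressionAvg 1 (2 ^ n) f x ≤
      Real.exp (9 / 2) * ((J : ℝ) ^ 2 * progressionAvg 1 (2 ^ n) f x) := by
    rw [← mul_assoc]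
    exact mul_le_mul_of_nonneg_right (selbergMass_powerset_primesIoc_le hJ) avg_nonneg
  have level_error_le : 64 * ((2 : ℝ) ^ r) ^ 40 / 2 ^ n ≤ 64 * (1 / 2) ^ (K * J) := by
    rw [mul_div_assoc]
    gcongr
    exact two_pow_pow_div_two_pow_le (by lia)
  have large_error_le := (mul_le_mul (sum_pow_card_div_modulus_large_le hJ r)
    (prod_one_add_sixteen_div_primesIoc_le (2 ^ J) r_ne_zero)
    (prod_nonneg fun _ _ => by positivity) (by positivity)).trans (large_moduli_le J K r hJ hK hr)
  set E : ℝ := (1 / 2) ^ (K * J)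
  set A := (J : ℝ) ^ 2 * progressionAvg 1 (2 ^ n) f x
  set H := highModuliSum (2 ^ J) M (2 ^ n) f x
  have exp_ge_one : 1 ≤ Real.exp (9 / 2) := Real.one_le_exp (by norm_num)
  calc _ ≤ Real.exp (9 / 2) * A + 1 * H + (64 + C) * E := by linarith
    _ ≤ (Real.exp (9 / 2) + 64 + C) * A + (Real.exp (9 / 2) + 64 + C) * H +
          (Real.exp (9 / 2) + 64 + C) * E := by
        have : 0 ≤ A := by positivity
        have := Real.exp_pos (9 / 2)
        gcongr <;> linarith
    _ = _ := by ring

lemma exists_weightedPrimeAvg_le_of_large_scale : ∃ C : ℝ, 0 < C ∧ ∀ J K n M : ℕ, J ≠ 0 → K ≠ 0 →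
    100 * (K * J ^ 2) ≤ n → 2 ^ n ≤ M →
    ∀ f : ℤ → ℝ, (∀ x, 0 ≤ f x) → (∀ x, f x ≤ 1) → ∀ x : ℤ,
    weightedPrimeAvg f (2 ^ n) x ≤
      C * ((J : ℝ) ^ 2 * progressionAvg 1 (2 ^ n) f x + highModuliSum (2 ^ J) M (2 ^ n) f x +
        (1 / 2 : ℝ) ^ (K * J)) := by
  obtain ⟨c, hc, theta_ge⟩ := exists_mul_le_theta
  obtain ⟨C, hC, sieve_le⟩ := exists_sum_sieveMajorant_mul_le
  refine ⟨c⁻¹ * (398 * C + 2), by positivity, fun J K n M hJ hK hn hM f hf0 hf1 x => ?_⟩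
  obtain ⟨r, hr⟩ : ∃ r, n / 100 = r := ⟨_, rfl⟩
  have KJ_sq_le : K * J ^ 2 ≤ r := by lia
  have KJ_le : K * J ≤ r :=
    (Nat.mul_le_mul_left K (Nat.le_self_pow two_ne_zero J)).trans KJ_sq_le
  have J_le : J ≤ r := (Nat.le_mul_of_pos_left J (Nat.pos_of_ne_zero hK)).trans KJ_le
  set E : ℝ := (1 / 2) ^ (K * J)
  set A := (J : ℝ) ^ 2 * progressionAvg 1 (2 ^ n) f x + highModuliSum (2 ^ J) M (2 ^ n) f x + E
  have E_le : E ≤ A := le_add_of_nonneg_left (add_nonneg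
    (mul_nonneg (sq_nonneg _) (progressionAvg_nonneg hf0 1 _ x)) (highModuliSum_nonneg ..))
  have log_le : Real.log (2 ^ n : ℕ) ≤ 199 * Real.log (2 ^ r : ℕ) := by
    push_cast
    rw [Real.log_pow, Real.log_pow, ← mul_assoc]
    gcongr
    exact_mod_cast (by lia : n ≤ 199 * r)
  have large_primes := (sum_primes_gt_mul_log_le (by norm_num) log_le Nat.one_le_two_pow
    (Nat.pow_le_pow_right two_pos J_le) hf0 x).trans (mul_le_mul_of_nonneg_left
      ((div_le_iff₀ (by positivity)).mp
        (sieve_le J K r n M hJ hK KJ_sq_le (by lia) hM f hf0 hf1 x)) (by norm_num))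
  have small_primes : ∑ p ∈ primesUpTo (2 ^ n) with ¬2 ^ r < p, f (x + p) * Real.log p ≤
      2 * (E * 2 ^ n) := by
    have R_le : (2 : ℝ) ^ r ≤ E * 2 ^ n := by
      rw [← div_le_iff₀ (by positivity)]
      simpa only [pow_one] using two_pow_pow_div_two_pow_le (by lia : r * 1 + K * J ≤ n)
    have := sum_primes_le_mul_log_le (Nat.pow_le_pow_right two_pos (by lia : r ≤ n)) hf1 x
    push_cast at this
    linarith
  have theta_ge' : c * 2 ^ n ≤ theta (2 ^ n) := mod_cast
    theta_ge (2 ^ n) (Nat.le_self_pow (by lia) 2)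
  rw [weightedPrimeAvg, inv_mul_le_iff₀ (lt_of_lt_of_le (by positivity) theta_ge')]
  calc _ ≤ (398 * C + 2) * A * 2 ^ n := by
        rw [← sum_filter_add_sum_filter_not _ (2 ^ r < ·)]
        have := mul_le_mul_of_nonneg_right E_le (pow_nonneg zero_le_two n)
        linarith
    _ = c * 2 ^ n * (c⁻¹ * (398 * C + 2) * A) := by field_simp
    _ ≤ _ := by
        have : 0 ≤ A := le_trans (by positivity) E_le
        gcongr

lemma exists_weightedPrimeAvg_le_mul_progressionAvg : ∃ C : ℝ, 0 < C ∧ ∀ n : ℕ, n ≠ 0 →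
    ∀ f : ℤ → ℝ, (∀ x, 0 ≤ f x) → ∀ x : ℤ,
    weightedPrimeAvg f (2 ^ n) x ≤ C * n * progressionAvg 1 (2 ^ n) f x := by
  obtain ⟨c, hc, theta_ge⟩ := exists_mul_le_theta
  refine ⟨c⁻¹, by positivity, fun n hn f hf x => ?_⟩
  have log_le (p : ℕ) (hp : p ∈ primesUpTo (2 ^ n)) : Real.log p ≤ n := by
    obtain ⟨hpn, prime_p⟩ := mem_primesUpTo.mp hp
    calc Real.log p ≤ Real.log ((2 : ℝ) ^ n) :=
          Real.log_le_log (mod_cast prime_p.pos) (mod_cast hpn)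
      _ = n * Real.log 2 := Real.log_pow ..
      _ ≤ n := mul_le_of_le_one_right n.cast_nonneg (by linarith [Real.log_two_lt_d9])
  have sum_le : ∑ p ∈ primesUpTo (2 ^ n), f (x + p) * Real.log p ≤
      n * ∑ y ∈ progression 1 (2 ^ n) x, f y := by
    rw [sum_progression one_pos, mul_sum]
    simp only [Nat.cast_one, one_mul]
    calc _ ≤ ∑ p ∈ primesUpTo (2 ^ n), n * f (x + p) := sum_le_sum fun p hp => by
          rw [mul_comm]
          exact mul_le_mul_of_nonneg_right (log_le p hp) (hf _)
      _ ≤ _ := sum_le_sum_of_subset_of_nonneg (fun p hp => ?_)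
          fun i _ _ => mul_nonneg n.cast_nonneg (hf _)
    obtain ⟨hpn, prime_p⟩ := mem_primesUpTo.mp hp
    exact mem_Icc.mpr ⟨prime_p.one_le, hpn⟩
  have theta_ge' : c * 2 ^ n ≤ theta (2 ^ n) := mod_cast
    theta_ge (2 ^ n) (Nat.le_self_pow hn 2)
  calc _ ≤ (c * 2 ^ n)⁻¹ * (n * ∑ y ∈ progression 1 (2 ^ n) x, f y) := by
        exact mul_le_mul (inv_anti₀ (by positivity) theta_ge') sum_le
          (Finset.sum_nonneg fun p _ => mul_nonneg (hf _) (Real.log_natCast_nonneg p))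
          (by positivity)
    _ = _ := by
        rw [progressionAvg]
        push_cast
        field_simp

lemma exists_weightedPrimeAvg_le : ∃ C : ℝ, 0 < C ∧ ∀ J n M : ℕ, J ≠ 0 → n ≠ 0 → 2 ^ n ≤ M →
    ∀ f : ℤ → ℝ, (∀ x, 0 ≤ f x) → (∀ x, f x ≤ 1) → ∀ x : ℤ,
    weightedPrimeAvg f (2 ^ n) x ≤
      C * ((J : ℝ) ^ 2 * progressionAvg 1 (2 ^ n) f x + highModuliSum (2 ^ J) M (2 ^ n) f x) +
        (1 / 2 : ℝ) ^ J / 2 := by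
  obtain ⟨C₁, hC₁, large_le⟩ := exists_weightedPrimeAvg_le_of_large_scale
  obtain ⟨C₂, hC₂, small_le⟩ := exists_weightedPrimeAvg_le_mul_progressionAvg
  obtain ⟨K, hK⟩ : ∃ K : ℕ, C₁ * (1 / 2 : ℝ) ^ K ≤ 1 / 2 := by
    obtain ⟨K, hK⟩ := exists_pow_lt_of_lt_one (by positivity : 0 < 1 / 2 / C₁) one_half_lt_one
    exact ⟨K, by linarith [(lt_div_iff₀' hC₁).mp hK]⟩
  refine ⟨C₁ + C₂ * (100 * (K + 1)), by positivity, fun J n M hJ hn hM f hf0 hf1 x => ?_⟩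
  have large := large_le J (K + 1) n M hJ K.succ_ne_zero
  have small := small_le n hn f hf0 x
  have avg_nonneg := progressionAvg_nonneg hf0 1 (2 ^ n) x
  have high_nonneg := highModuliSum_nonneg (2 ^ J) M (2 ^ n) f x
  set A := progressionAvg 1 (2 ^ n) f x
  set H := highModuliSum (2 ^ J) M (2 ^ n) f x
  have : 0 ≤ (J : ℝ) ^ 2 * A + H := by positivity
  rcases le_or_gt (100 * ((K + 1) * J ^ 2)) n with hn' | hn'
  · have error_le : C₁ * (1 / 2 : ℝ) ^ ((K + 1) * J) ≤ (1 / 2) ^ J / 2 :=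
      calc C₁ * (1 / 2 : ℝ) ^ ((K + 1) * J) ≤ C₁ * (1 / 2 : ℝ) ^ (K + J) := by
            gcongr C₁ * ?_
            exact pow_le_pow_of_le_one (by norm_num) (by norm_num)
              (by nlinarith [Nat.pos_of_ne_zero hJ])
        _ = C₁ * (1 / 2 : ℝ) ^ K * (1 / 2) ^ J := by ring
        _ ≤ 1 / 2 * (1 / 2) ^ J := by gcongr
        _ = _ := by ring
    have : 0 ≤ C₂ * (100 * (K + 1)) * ((J : ℝ) ^ 2 * A + H) := by positivity
    linarith [large hn' hM f hf0 hf1 x]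
  · have scale_le : (n : ℝ) ≤ 100 * (K + 1) * J ^ 2 := by
      rw [mul_assoc]
      exact_mod_cast hn'.le
    calc _ ≤ C₂ * (100 * (K + 1) * J ^ 2) * A := small.trans (by gcongr)
      _ ≤ C₂ * (100 * (K + 1) * J ^ 2) * A + (C₂ * (100 * (K + 1)) * H +
            C₁ * ((J : ℝ) ^ 2 * A + H) + (1 / 2) ^ J / 2) := le_add_of_nonneg_right (by positivity)
      _ = _ := by ring

end Pointwise

section WeakType

variable {f : ℤ → ℝ} {l t : ℝ}

lemma exists_dyadic_scale (hl : 0 < l) (hl1 : l < 1) : ∃ J : ℕ, J ≠ 0 ∧ (1 / 2 : ℝ) ^ J ≤ l ∧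
    ((2 : ℝ) ^ J) ^ (-(1 / 8) : ℝ) ≤ l ∧ (J : ℝ) ≤ 13 * Real.log (Real.exp 1 / l) := by
  have log_div_eq : Real.log (Real.exp 1 / l) = 1 - Real.log l := by
    rw [Real.log_div (Real.exp_ne_zero 1) hl.ne', Real.log_exp]
  have log_neg : Real.log l < 0 := Real.log_neg hl hl1
  have log_two_gt : 0.69 < Real.log 2 := by linarith [Real.log_two_gt_d9]
  set L := Real.log (Real.exp 1 / l)
  have le_ceil : 8 * L ≤ ⌈8 * L / Real.log 2⌉₊ * Real.log 2 :=
    (div_le_iff₀ (by linarith)).mp (Nat.le_ceil _)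
  have ceil_lt : (⌈8 * L / Real.log 2⌉₊ : ℝ) < 8 * L / Real.log 2 + 1 :=
    Nat.ceil_lt_add_one (div_nonneg (by linarith) (by linarith))
  set J := ⌈8 * L / Real.log 2⌉₊
  refine ⟨J, fun hJ => ?_, ?_, ?_, ?_⟩
  · rw [hJ, Nat.cast_zero, zero_mul] at le_ceil
    linarith
  · rw [← Real.log_le_log_iff (by positivity) hl, Real.log_pow, one_div, Real.log_inv]
    linarith
  · rw [← Real.log_le_log_iff (by positivity) hl, Real.log_rpow (by positivity), Real.log_pow]
    linarith
  · have : 8 * L / Real.log 2 ≤ 12 * L := by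
      rw [div_le_iff₀ (by linarith)]
      nlinarith
    linarith

lemma sqNorm_le_tsum (hf : f.HasFiniteSupport) (hf0 : ∀ x, 0 ≤ f x) (hf1 : ∀ x, f x ≤ 1) :
    sqNorm f ≤ ∑' x, f x :=
  (summable_sq_of_hasFiniteSupport hf).tsum_le_tsum
    (fun x => pow_le_of_le_one (hf0 x) (hf1 x) two_ne_zero) (summable_of_hasFiniteSupport hf)

lemma card_le_tsum_div_of_le_progressionAvg (hf : Summable f) (hf0 : ∀ x, 0 ≤ f x) (ht : 0 < t)
    {X : Finset ℤ} {N : ℤ → ℕ} (hN : ∀ x ∈ X, 1 ≤ N x)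
    (hX : ∀ x ∈ X, t ≤ progressionAvg 1 (N x) f x) : #X ≤ (∑' x, f x) / t := by
  rw [le_div_iff₀' ht]
  refine (mul_card_le_sum_biUnion_progression one_pos hf0 ht.le hN fun x hx => ?_).trans
    (hf.sum_le_tsum _ fun y _ => hf0 y)
  have N_pos : (0 : ℝ) < N x := Nat.cast_pos.mpr (hN x hx)
  rw [← le_div_iff₀ N_pos, div_eq_inv_mul]
  exact hX x hx

lemma exists_card_le_of_le_highModuliSum : ∃ C : ℝ, 0 < C ∧ ∀ f : ℤ → ℝ,
    f.HasFiniteSupport → ∀ (Z M : ℕ) (t : ℝ), 0 < Z → 0 < t → ∀ (X : Finset ℤ) (N : ℤ → ℕ),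
    (∀ x ∈ X, t ≤ highModuliSum Z M (N x) f x) →
    #X ≤ C * (Z : ℝ) ^ (-(1 / 8) : ℝ) * sqNorm f / t ^ 2 := by
  obtain ⟨C, hC, sum_sq_le⟩ := exists_sum_sq_sum_localCorrelation_le
  refine ⟨C, hC, fun f hf Z M t hZ ht X N hX => ?_⟩
  rw [le_div_iff₀ (by positivity)]
  calc #X * t ^ 2 ≤ ∑ x ∈ X, highModuliSum Z M (N x) f x ^ 2 := by
        rw [← nsmul_eq_mul]
        exact card_nsmul_le_sum _ _ _ fun x hx => pow_le_pow_left₀ ht.le (hX x hx) 2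
    _ ≤ _ := sum_sq_le f hf X N (moduliIcc Z M) Z (Nat.cast_pos.mpr hZ) fun s hs =>
        Nat.cast_le.mpr (mem_moduliIcc.mp hs).1

lemma div_four_mul_le_or_le {C a b : ℝ} (hC : 0 < C) (h : l / 2 < C * (a + b)) :
    l / (4 * C) ≤ a ∨ l / (4 * C) ≤ b := by
  rw [div_le_iff₀' (by positivity), div_le_iff₀' (by positivity)]
  by_contra! hlt
  linarith

lemma exists_card_le_of_half_pow_le : ∃ C : ℝ, 0 < C ∧
    ∀ f : ℤ → ℝ, f.HasFiniteSupport → (∀ x, 0 ≤ f x) → (∀ x, f x ≤ 1) →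
    ∀ (J : ℕ) (l : ℝ), J ≠ 0 → 0 < l → (1 / 2) ^ J ≤ l → ∀ (X : Finset ℤ) (n : ℤ → ℕ),
    (∀ x ∈ X, n x ≠ 0 ∧ l < weightedPrimeAvg f (2 ^ n x) x) →
    (#X : ℝ) ≤ C * ((J : ℝ) ^ 2 / l + ((2 : ℝ) ^ J) ^ (-(1 / 8) : ℝ) / l ^ 2) * ∑' x, f x := by
  obtain ⟨C₁, hC₁, avg_le⟩ := exists_weightedPrimeAvg_le
  obtain ⟨C₂, hC₂, card_le⟩ := exists_card_le_of_le_highModuliSum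
  refine ⟨4 * C₁ + 16 * C₁ ^ 2 * C₂, by positivity,
    fun f hf hf0 hf1 J l hJ hl half_pow_le X n hX => ?_⟩
  have J_sq_pos : (0 : ℝ) < (J : ℝ) ^ 2 := pow_pos (Nat.cast_pos.mpr (Nat.pos_of_ne_zero hJ)) 2
  set T := ∑' x, f x
  have T_nonneg : 0 ≤ T := tsum_nonneg hf0
  set ρ : ℝ := (2 ^ J) ^ (-(1 / 8) : ℝ)
  set A := fun x => progressionAvg 1 (2 ^ n x) f x
  set H := fun x => highModuliSum (2 ^ J) (2 ^ X.sup n) (2 ^ n x) f x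
  set t := l / (4 * C₁) with ht
  have cover : X ⊆ {x ∈ X | t / J ^ 2 ≤ A x} ∪ {x ∈ X | t ≤ H x} := fun x hx => by
    have lt_main := (hX x hx).2.trans_le (avg_le J (n x) (2 ^ X.sup n) hJ (hX x hx).1
      (Nat.pow_le_pow_right two_pos (le_sup hx)) f hf0 hf1 x)
    simp only [mem_union, mem_filter, hx, true_and, div_le_iff₀' J_sq_pos]
    exact div_four_mul_le_or_le hC₁ (by linarith)
  have card_avg_le : (#{x ∈ X | t / J ^ 2 ≤ A x} : ℝ) ≤ 4 * C₁ * (J ^ 2 / l) * T :=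
    calc _ ≤ T / (t / J ^ 2) :=
          card_le_tsum_div_of_le_progressionAvg (N := fun x => 2 ^ n x)
            (summable_of_hasFiniteSupport hf) hf0 (by positivity)
            (fun _ _ => Nat.one_le_two_pow) fun x hx => (mem_filter.mp hx).2
      _ = _ := by rw [ht]; field_simp
  have card_high_le : (#{x ∈ X | t ≤ H x} : ℝ) ≤ 16 * C₁ ^ 2 * C₂ * (ρ / l ^ 2) * T :=
    calc _ ≤ C₂ * ((2 ^ J : ℕ) : ℝ) ^ (-(1 / 8) : ℝ) * sqNorm f / t ^ 2 :=
          card_le f hf (2 ^ J) _ t (by positivity) (by positivity) _ (fun x => 2 ^ n x)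
            fun x hx => (mem_filter.mp hx).2
      _ ≤ C₂ * ρ * T / t ^ 2 := by
          push_cast
          gcongr
          exact sqNorm_le_tsum hf hf0 hf1
      _ = _ := by rw [ht]; field_simp; norm_num
  calc (#X : ℝ) ≤ _ := Nat.cast_le.mpr ((card_le_card cover).trans (card_union_le _ _))
    _ ≤ 4 * C₁ * (J ^ 2 / l) * T + 16 * C₁ ^ 2 * C₂ * (ρ / l ^ 2) * T := by
        rw [Nat.cast_add]
        exact add_le_add card_avg_le card_high_le
    _ ≤ 4 * C₁ * (J ^ 2 / l) * T + 16 * C₁ ^ 2 * C₂ * (ρ / l ^ 2) * T +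
          (16 * C₁ ^ 2 * C₂ * (J ^ 2 / l) * T + 4 * C₁ * (ρ / l ^ 2) * T) :=
        le_add_of_nonneg_right (by positivity)
    _ = _ := by ring

lemma exists_card_le_of_hasFiniteSupport : ∃ C : ℝ, 0 < C ∧
    ∀ f : ℤ → ℝ, f.HasFiniteSupport → (∀ x, 0 ≤ f x) → (∀ x, f x ≤ 1) →
    ∀ l : ℝ, 0 < l → l < 1 → ∀ (X : Finset ℤ) (n : ℤ → ℕ),
    (∀ x ∈ X, n x ≠ 0 ∧ l < weightedPrimeAvg f (2 ^ n x) x) →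
    (#X : ℝ) ≤ C * l⁻¹ * Real.log (Real.exp 1 / l) ^ 2 * ∑' x, f x := by
  obtain ⟨C, hC, card_le⟩ := exists_card_le_of_half_pow_le
  refine ⟨C * (2 * 13 ^ 2), by positivity, fun f hf hf0 hf1 l hl hl1 X n hX => ?_⟩
  obtain ⟨J, hJ, half_pow_le, rpow_le, J_le⟩ := exists_dyadic_scale hl hl1
  have T_nonneg : 0 ≤ ∑' x, f x := tsum_nonneg hf0
  have one_le_J_sq : 1 ≤ (J : ℝ) ^ 2 := one_le_pow₀ (mod_cast Nat.pos_of_ne_zero hJ)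
  calc (#X : ℝ) ≤ C * ((J : ℝ) ^ 2 / l + ((2 : ℝ) ^ J) ^ (-(1 / 8) : ℝ) / l ^ 2) * ∑' x, f x :=
        card_le f hf hf0 hf1 J l hJ hl half_pow_le X n hX
    _ ≤ C * ((J : ℝ) ^ 2 / l + l * J ^ 2 / l ^ 2) * ∑' x, f x := by
        gcongr
        exact rpow_le.trans (le_mul_of_one_le_right hl.le one_le_J_sq)
    _ = C * 2 * l⁻¹ * (J : ℝ) ^ 2 * ∑' x, f x := by field_simp; ring
    _ ≤ C * 2 * l⁻¹ * (13 * Real.log (Real.exp 1 / l)) ^ 2 * ∑' x, f x := by gcongr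
    _ = _ := by ring

lemma weightedPrimeAvg_congr {g : ℤ → ℝ} {N : ℕ} {x : ℤ}
    (h : ∀ p ∈ primesUpTo N, f (x + p) = g (x + p)) :
    weightedPrimeAvg f N x = weightedPrimeAvg g N x := by
  simp only [weightedPrimeAvg]
  exact congrArg _ (sum_congr rfl fun p hp => by rw [h p hp])

lemma exists_card_le_of_lt_weightedPrimeAvg : ∃ C : ℝ, 0 < C ∧
    ∀ f : ℤ → ℝ, Summable f → (∀ x, 0 ≤ f x) → (∀ x, f x ≤ 1) →
    ∀ l : ℝ, 0 < l → l < 1 → ∀ X : Finset ℤ,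
    (∀ x ∈ X, ∃ n : ℕ, 1 ≤ n ∧ l < weightedPrimeAvg f (2 ^ n) x) →
    (#X : ℝ) ≤ C * l⁻¹ * Real.log (Real.exp 1 / l) ^ 2 * ∑' x, f x := by
  obtain ⟨C, hC, card_le⟩ := exists_card_le_of_hasFiniteSupport
  refine ⟨C, hC, fun f hf hf0 hf1 l hl hl1 X hX => ?_⟩
  choose! n hn hlt using hX
  set T := X.biUnion fun x => (primesUpTo (2 ^ n x)).image fun p : ℕ => x + p
  have avg_eq (x : ℤ) (hx : x ∈ X) : weightedPrimeAvg f (2 ^ n x) x =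
      weightedPrimeAvg ((T : Set ℤ).indicator f) (2 ^ n x) x :=
    weightedPrimeAvg_congr fun p hp => (Set.indicator_of_mem
      (mem_coe.mpr (mem_biUnion.mpr ⟨x, hx, mem_image_of_mem _ hp⟩)) f).symm
  have indicator_le (x : ℤ) : (T : Set ℤ).indicator f x ≤ f x :=
    Set.indicator_le_self' (fun x _ => hf0 x) x
  calc _ ≤ _ := card_le ((T : Set ℤ).indicator f)
        (T.finite_toSet.subset Set.support_indicator_subset)
        (Set.indicator_nonneg fun x _ => hf0 x) (fun x => (indicator_le x).trans (hf1 x))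
        l hl hl1 X n fun x hx =>
          ⟨Nat.one_le_iff_ne_zero.mp (hn x hx), avg_eq x hx ▸ hlt x hx⟩
    _ ≤ _ := mul_le_mul_of_nonneg_left ((hf.indicator _).tsum_le_tsum indicator_le hf)
        (by positivity)

lemma finite_and_ncard_le_of_forall_card_le {α : Type*} {S : Set α} {B : ℝ}
    (h : ∀ X : Finset α, (X : Set α) ⊆ S → (#X : ℝ) ≤ B) : S.Finite ∧ (S.ncard : ℝ) ≤ B := by
  have finite : S.Finite := by
    by_contra infinite
    obtain ⟨k, hk⟩ := exists_nat_gt B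
    obtain ⟨X, hXS, rfl⟩ := Set.Infinite.exists_subset_card_eq infinite k
    exact hk.not_ge (h X hXS)
  refine ⟨finite, ?_⟩
  rw [Set.ncard_eq_toFinset_card S finite]
  exact h _ finite.coe_toFinset.subset

lemma tsum_indicator_one (F : Finset ℤ) : ∑' x, (F : Set ℤ).indicator (1 : ℤ → ℝ) x = #F := by
  rw [← sum_eq_tsum_indicator]
  simp

end WeakType

end PrimeMaximal

theorem stmt_5_general :
    ∃ C : ℝ, 0 < C ∧
      ∀ (f : ℤ → ℝ) (l : ℝ), Summable f → (∀ x, 0 ≤ f x) → (∀ x, f x ≤ 1) → 0 < l → l < 1 →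
        {x : ℤ | ∃ n : ℕ, 1 ≤ n ∧ l < weightedPrimeAvg f (2 ^ n) x}.Finite ∧
        ({x : ℤ | ∃ n : ℕ, 1 ≤ n ∧ l < weightedPrimeAvg f (2 ^ n) x}.ncard : ℝ) ≤
          C * l⁻¹ * (Real.log (Real.exp 1 / l)) ^ 2 * ∑' x, f x := by
  obtain ⟨C, hC, card_le⟩ := PrimeMaximal.exists_card_le_of_lt_weightedPrimeAvg
  exact ⟨C, hC, fun f l hf hf0 hf1 hl hl1 =>
    PrimeMaximal.finite_and_ncard_le_of_forall_card_le fun X hX =>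
      card_le f hf hf0 hf1 l hl hl1 X fun _ hx => hX hx⟩

/-- Restricted weak type inequality with logarithmic loss for the maximal function of the
weighted averages: for a finite `F ⊆ ℤ` and `0 < λ < 1`,
`#{x : sup_{n ∈ ℕ} ℳ_{2^n}(𝟙_F)(x) > λ} ≤ C λ⁻¹ log²(e/λ) #F`. -/
theorem stmt_5 :
    ∃ C : ℝ, 0 < C ∧
      ∀ (F : Finset ℤ) (l : ℝ), 0 < l → l < 1 →
        {x : ℤ | ∃ n : ℕ, 1 ≤ n ∧
            l < weightedPrimeAvg ((F : Set ℤ).indicator 1) (2 ^ n) x}.Finite ∧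
        ({x : ℤ | ∃ n : ℕ, 1 ≤ n ∧
            l < weightedPrimeAvg ((F : Set ℤ).indicator 1) (2 ^ n) x}.ncard : ℝ) ≤
          C * l⁻¹ * (Real.log (Real.exp 1 / l)) ^ 2 * F.card := by
  obtain ⟨C, hC, bound⟩ := stmt_5_general
  exact ⟨C, hC, fun F l hl hl1 => PrimeMaximal.tsum_indicator_one F ▸ bound _ l
    (summable_of_hasFiniteSupport (F.finite_toSet.subset Set.support_indicator_subset))
    (Set.indicator_nonneg fun _ _ => zero_le_one)
    (Set.indicator_le' (fun _ _ => le_rfl) fun _ _ => zero_le_one) hl hl1⟩
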